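/- There exists a real constant β > 1 such that M(n)^{1/n} → β as n → ∞, and moreover for every ε with 0 < ε < 1/6 there is a constant K > 0 such that for all sufficiently large n, |log M(n) − n·log β| ≤ K·n·exp(−√((1/6 − ε)·log n·log log n)). -/

import Mathlib

/-!
The proof turns maximum primitive sets into labellings. Every positive integer is `v * 2 ^ i` with
`v` odd, and a primitive set of size `⌈n / 2⌉` in `{1, …, n}` contains exactly one number
`v * 2 ^ e v` for each odd `v ≤ n`. So `M n` counts the labellings `e` of the odd numbers with
`e v ≤ log₂ (n / v)` that decrease strictly along proper divisibility (`M_eq_cnt`).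

Fix a parameter `t`. Adding an odd number `u` below all those already present multiplies the count
by a factor between `1` and `1 + log₂ (n / u)` (`cnt_bounds`), so the odd numbers `u ≤ n / t` affect
`log (M n)` by `O(n * log t / t)` only (`log_M_sub`). Among the odd numbers in `(n / t, n]` a proper
divisibility has a quotient below `t`, hence preserves the `t`-rough part `m`; the count therefore
factors over `m`, and the factor of `m` depends only on `⌊n / m⌋` (`log_cnt_topOdds`). Up to the
stated error, `log (M n)` is the sum over `t`-rough `m ≤ n` of a function `lam t` of `⌊n / m⌋`.

The rough numbers with `⌊n / m⌋ > D * t` matter only through `t`-smooth numbers larger than `D`,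
whose reciprocals have a small sum by Rankin's trick (`rankin`, `tail_le`). The other `m` lie in the
intervals `(n / (j + 1), n / j]` with `j ≤ D * t`, and Brun's pure sieve counts the rough ones there
(`brun_sieve`, `main_part`). The result, `master`, is `log (M n) = A * n` up to an explicit error,
where `A` depends on `t`, `D` and the truncation level `r`, but not on `n`.

With parameters chosen from `n`, this holds with the same `A` for all `n' ≥ n`, with error
`n' * O(exp (-√((1 / 6 - ε) * log n * log log n)))` (`uniform_approx`). Hence `log (M n) / n` is a
Cauchy sequence with limit `ℓ`, and `ℓ` is as close to `A` as the error term says; this gives both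
the convergence and its rate, with `β = exp ℓ`. Finally `β > 1` because `M (12 * k) ≥ 2 ^ k`
(`two_pow_le_M`).
-/

/-- A finite set of positive integers is primitive if no element divides another. -/
def IsPrimitive (S : Finset ℕ) : Prop := ∀ a ∈ S, ∀ b ∈ S, a ∣ b → a = b

/-- `M n` is the number of primitive subsets of `{1, 2, …, n}` of maximum size `⌈n/2⌉`. -/
noncomputable def M (n : ℕ) : ℕ :=
  Nat.card {S : Finset ℕ // S ⊆ Finset.Icc 1 n ∧ IsPrimitive S ∧ S.card = (n + 1) / 2}

/-! ### Labellings decreasing along divisibility -/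

/-- The labellings `e` of `A` admissible at height `n`: `e v ≤ log₂ (n / v)`, so that
`v * 2 ^ e v ≤ n`, and `e` strictly decreases along proper divisibility inside `A`. Labels outside
`A` are normalised to `0`, so that a labelling is determined by its values on `A`. -/
def Lab (n : ℕ) (A : Finset ℕ) : Set (ℕ → ℕ) :=
  {e | (∀ v, v ∉ A → e v = 0) ∧ (∀ v ∈ A, e v ≤ Nat.log 2 (n / v)) ∧
    ∀ u ∈ A, ∀ v ∈ A, u ∣ v → u ≠ v → e v < e u}

/-- The number of admissible labellings of `A` at height `n`; the set of these is finite
(`Lab_finite`), so `Set.ncard` takes no junk value. -/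
noncomputable def cnt (n : ℕ) (A : Finset ℕ) : ℕ := (Lab n A).ncard

lemma Lab_finite (n : ℕ) (A : Finset ℕ) : (Lab n A).Finite := by
  let f : Lab n A → (A → Fin (Nat.log 2 n + 1)) := fun e v =>
    ⟨e.1 v, Nat.lt_succ_of_le ((e.2.2.1 v v.2).trans (Nat.log_mono_right (Nat.div_le_self _ _)))⟩
  have hf : Function.Injective f := by
    intro e e' h
    apply Subtype.ext
    funext v
    by_cases hv : v ∈ A
    · have := congrFun h ⟨v, hv⟩
      simpa [f] using this
    · rw [e.2.1 v hv, e'.2.1 v hv]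
  have : Finite (Lab n A) := Finite.of_injective f hf
  exact Set.toFinite _

lemma cnt_empty (n : ℕ) : cnt n ∅ = 1 := by
  unfold cnt
  rw [Set.ncard_eq_one]
  refine ⟨fun _ => 0, ?_⟩
  ext e
  simp only [Lab, Finset.notMem_empty, Set.mem_ofPred_eq, Set.mem_singleton_iff]
  constructor
  · rintro ⟨h, -, -⟩
    funext v
    exact h v (by simp)
  · rintro rfl
    simp

lemma cnt_insert_le {n u : ℕ} {A : Finset ℕ} (hu : u ∉ A) :
    cnt n (insert u A) ≤ cnt n A * (Nat.log 2 (n / u) + 1) := by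
  unfold cnt
  have h : (Lab n (insert u A)).ncard ≤
      (Lab n A ×ˢ (Finset.range (Nat.log 2 (n / u) + 1) : Set ℕ)).ncard := by
    refine Set.ncard_le_ncard_of_injOn (fun e => (Function.update e u 0, e u)) ?_ ?_
      ((Lab_finite n A).prod (Finset.finite_toSet _))
    · rintro e ⟨h0, h1, h2⟩
      refine ⟨⟨?_, ?_, ?_⟩, ?_⟩
      · intro v hv
        by_cases hvu : v = u
        · subst hvu; simp
        · simp only [Function.update_of_ne hvu]
          exact h0 v (by simp [hvu, hv])
      · intro v hv
        have hvu : v ≠ u := fun h => hu (h ▸ hv)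
        simp only [Function.update_of_ne hvu]
        exact h1 v (by simp [hv])
      · intro v hv w hw hd hne
        have hvu : v ≠ u := fun h => hu (h ▸ hv)
        have hwu : w ≠ u := fun h => hu (h ▸ hw)
        simp only [Function.update_of_ne hvu, Function.update_of_ne hwu]
        exact h2 v (by simp [hv]) w (by simp [hw]) hd hne
      · have := h1 u (by simp)
        simp only [Finset.coe_range, Set.mem_Iio]
        omega
    · intro e _ e' _ h
      simp only [Prod.mk.injEq] at h
      funext v
      by_cases hvu : v = u
      · subst hvu; exact h.2
      · have := congrFun h.1 v
        simpa [Function.update_of_ne hvu] using this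
  rwa [Set.ncard_prod, Set.ncard_coe_finset, Finset.card_range] at h

/-- A new smallest element can always be given its top label `⌊log₂ (n / u)⌋`: a proper multiple
`v` of `u` has `v ≥ 2 * u`, so its label is at most one less. -/
lemma le_cnt_insert {n u : ℕ} {A : Finset ℕ} (hu0 : 0 < u) (hA : ∀ v ∈ A, u < v ∧ v ≤ n) :
    cnt n A ≤ cnt n (insert u A) := by
  unfold cnt
  have hu : u ∉ A := fun h => lt_irrefl _ (hA u h).1
  refine Set.ncard_le_ncard_of_injOn (fun e => Function.update e u (Nat.log 2 (n / u))) ?_ ?_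
      (Lab_finite n _)
  · rintro e ⟨h0, h1, h2⟩
    refine ⟨?_, ?_, ?_⟩
    · intro v hv
      simp only [Finset.mem_insert, not_or] at hv
      simp only [Function.update_of_ne hv.1]
      exact h0 v hv.2
    · intro v hv
      by_cases hvu : v = u
      · subst hvu; simp
      · simp only [Function.update_of_ne hvu]
        exact h1 v (by simpa [hvu] using hv)
    · intro v hv w hw hd hne
      by_cases hwu : w = u
      · subst hwu
        have hv' : v ∈ A := by simpa [hne] using hv
        exact absurd (Nat.le_of_dvd hu0 hd) (by have := (hA v hv').1; omega)
      · have hw' : w ∈ A := by simpa [hwu] using hw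
        by_cases hvu : v = u
        · subst hvu
          simp only [Function.update_of_ne hwu, Function.update_self]
          obtain ⟨h3, h4⟩ := hA w hw'
          obtain ⟨k, rfl⟩ := hd
          -- a proper multiple of `v` is at least `2 * v`, so its top label is strictly smaller
          have hk : 2 ≤ k := by
            by_contra hk
            have : k = 0 ∨ k = 1 := by omega
            rcases this with rfl | rfl <;> simp at h3
          have h5 : n / (v * k) ≤ n / v / 2 := by
            rw [Nat.div_div_eq_div_mul]
            exact Nat.div_le_div_left (Nat.mul_le_mul_left _ hk) (by omega)
          have h6 : 2 ≤ n / v := by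
            rw [Nat.le_div_iff_mul_le hu0]
            nlinarith
          have h7 : Nat.log 2 (n / v / 2) = Nat.log 2 (n / v) - 1 := Nat.log_div_base _ _
          have h8 : 0 < Nat.log 2 (n / v) := Nat.log_pos (by norm_num) h6
          have h9 := h1 _ hw'
          have h10 := Nat.log_mono_right (b := 2) h5
          omega
        · simp only [Function.update_of_ne hvu, Function.update_of_ne hwu]
          exact h2 v (by simpa [hvu] using hv) w hw' hd hne
  · intro e he e' he' h
    funext v
    by_cases hvu : v = u
    · subst hvu; rw [he.1 v hu, he'.1 v hu]
    · have := congrFun h v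
      simpa [Function.update_of_ne hvu] using this

/-- Adding small elements to `A`, from the largest downwards, never decreases the number of
labellings and multiplies it at most by the number of values available to each new label. -/
lemma cnt_bounds {n N : ℕ} (B A : Finset ℕ) (hB : ∀ u ∈ B, 0 < u ∧ u ≤ N ∧ u ≤ n)
    (hA : ∀ v ∈ A, N < v ∧ v ≤ n) :
    cnt n A ≤ cnt n (B ∪ A) ∧
      cnt n (B ∪ A) ≤ cnt n A * ∏ u ∈ B, (Nat.log 2 (n / u) + 1) := by
  induction B using Finset.induction_on_min with
  | empty => simp
  | insert u B hlt ih =>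
    have hu : u ∉ B := fun h => lt_irrefl _ (hlt u h)
    obtain ⟨ih1, ih2⟩ := ih (fun u hu => hB u (by simp [hu]))
    obtain ⟨hu0, hu1, hu2⟩ := hB u (by simp)
    rw [Finset.insert_union]
    constructor
    · refine ih1.trans (le_cnt_insert hu0 ?_)
      intro v hv
      rcases Finset.mem_union.1 hv with hv | hv
      · exact ⟨hlt v hv, (hB v (by simp [hv])).2.2⟩
      · exact ⟨hu1.trans_lt (hA v hv).1, (hA v hv).2⟩
    · rw [Finset.prod_insert hu]
      have : u ∉ B ∪ A := by
        simp only [Finset.mem_union, not_or]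
        exact ⟨hu, fun h => absurd (hA u h).1 (by omega)⟩
      calc _ ≤ cnt n (B ∪ A) * (Nat.log 2 (n / u) + 1) := cnt_insert_le this
        _ ≤ _ := by
          refine (Nat.mul_le_mul_right _ ih2).trans (le_of_eq ?_)
          ring

lemma cnt_pos {n : ℕ} (A : Finset ℕ) (hA : ∀ v ∈ A, 0 < v ∧ v ≤ n) : 0 < cnt n A := by
  have := (cnt_bounds (N := n) A ∅ (fun u hu => ⟨(hA u hu).1, (hA u hu).2, (hA u hu).2⟩)
    (by simp)).1
  simp only [cnt_empty, Finset.union_empty] at this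
  omega

lemma cnt_le_prod {n : ℕ} (A : Finset ℕ) (hA : ∀ v ∈ A, 0 < v ∧ v ≤ n) :
    cnt n A ≤ ∏ u ∈ A, (Nat.log 2 (n / u) + 1) := by
  have := (cnt_bounds (N := n) A ∅ (fun u hu => ⟨(hA u hu).1, (hA u hu).2, (hA u hu).2⟩)
    (by simp)).2
  simpa [cnt_empty] using this

/-- Labellings of two sets with no divisibility between them are chosen independently. -/
lemma cnt_union {n : ℕ} {A B : Finset ℕ} (hd : Disjoint A B)
    (h1 : ∀ u ∈ A, ∀ v ∈ B, ¬ u ∣ v ∧ ¬ v ∣ u) :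
    cnt n (A ∪ B) = cnt n A * cnt n B := by
  unfold cnt
  rw [← Set.ncard_prod]
  have hdis : ∀ v, v ∈ A → v ∉ B := fun v hv hv' => Finset.disjoint_left.1 hd hv hv'
  refine Set.ncard_congr (fun e _ => (fun v => if v ∈ A then e v else 0,
    fun v => if v ∈ B then e v else 0)) ?_ ?_ ?_
  · rintro e ⟨h0, h2, h3⟩
    refine ⟨⟨?_, ?_, ?_⟩, ?_, ?_, ?_⟩
    · intro v hv; simp [hv]
    · intro v hv; simpa [hv] using h2 v (by simp [hv])
    · intro u hu v hv; simpa [hu, hv] using h3 u (by simp [hu]) v (by simp [hv])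
    · intro v hv; simp [hv]
    · intro v hv; simpa [hv] using h2 v (by simp [hv])
    · intro u hu v hv; simpa [hu, hv] using h3 u (by simp [hu]) v (by simp [hv])
  · intro e e' he he' h
    simp only [Prod.mk.injEq] at h
    funext v
    by_cases hA : v ∈ A
    · simpa [hA] using congrFun h.1 v
    · by_cases hB : v ∈ B
      · simpa [hB] using congrFun h.2 v
      · rw [he.1 v (by simp [hA, hB]), he'.1 v (by simp [hA, hB])]
  · rintro ⟨e, e'⟩ ⟨⟨h0, h2, h3⟩, h0', h2', h3'⟩
    dsimp only at h0 h2 h3 h0' h2' h3'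
    refine ⟨fun v => e v + e' v, ⟨?_, ?_, ?_⟩, ?_⟩
    · intro v hv
      simp only [Finset.mem_union, not_or] at hv
      simp [h0 v hv.1, h0' v hv.2]
    · intro v hv
      by_cases hA : v ∈ A
      · simpa [h0' v (hdis v hA)] using h2 v hA
      · have hB : v ∈ B := by simpa [hA] using hv
        simpa [h0 v hA] using h2' v hB
    · intro u hu v hv hdv hne
      by_cases hA : u ∈ A
      · have hvA : v ∈ A := by
          by_contra hvA
          exact (h1 u hA v (by simpa [hvA] using hv)).1 hdv
        simpa [h0' u (hdis u hA), h0' v (hdis v hvA)] using h3 u hA v hvA hdv hne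
      · have hB : u ∈ B := by simpa [hA] using hu
        have hvA : v ∉ A := fun hvA => (h1 v hvA u hB).2 hdv
        have hvB : v ∈ B := by simpa [hvA] using hv
        simpa [h0 u hA, h0 v hvA] using h3' u hB v hvB hdv hne
    · simp only [Prod.mk.injEq]
      constructor
      · funext v
        by_cases hA : v ∈ A
        · simp [hA, h0' v (hdis v hA)]
        · simp [hA, h0 v hA]
      · funext v
        by_cases hB : v ∈ B
        · have hA : v ∉ A := fun h => hdis v h hB
          simp [hB, h0 v hA]
        · simp [hB, h0' v hB]

/-- If `φ` is constant along divisibility in `A`, the count factors over the fibres of `φ`. -/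
lemma cnt_fiber {n : ℕ} (φ : ℕ → ℕ) (C A : Finset ℕ) (hC : ∀ v ∈ A, φ v ∈ C)
    (h : ∀ u ∈ A, ∀ v ∈ A, u ∣ v → φ u = φ v) :
    cnt n A = ∏ c ∈ C, cnt n (A.filter (fun v => φ v = c)) := by
  induction C using Finset.induction_on generalizing A with
  | empty =>
    have : A = ∅ := Finset.eq_empty_of_forall_notMem (fun v hv => by simpa using hC v hv)
    simp [this, cnt_empty]
  | insert c C hc ih =>
    rw [Finset.prod_insert hc]
    have hA : A = A.filter (fun v => φ v = c) ∪ A.filter (fun v => ¬ φ v = c) :=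
      (Finset.filter_union_filter_not_eq _ A).symm
    conv_lhs => rw [hA]
    rw [cnt_union (Finset.disjoint_filter_filter_not _ _ _)]
    · congr 1
      rw [ih (A.filter (fun v => ¬ φ v = c))]
      · refine Finset.prod_congr rfl fun d hd => ?_
        congr 1
        ext v
        simp only [Finset.mem_filter]
        constructor
        · rintro ⟨⟨h1, h2⟩, h3⟩; exact ⟨h1, h3⟩
        · rintro ⟨h1, h3⟩
          refine ⟨⟨h1, ?_⟩, h3⟩
          rintro rfl
          exact hc (h3 ▸ hd)
      · intro v hv
        simp only [Finset.mem_filter] at hv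
        simpa [hv.2] using hC v hv.1
      · intro u hu v hv
        exact h u (Finset.mem_filter.1 hu).1 v (Finset.mem_filter.1 hv).1
    · intro u hu v hv
      simp only [Finset.mem_filter] at hu hv
      constructor
      · intro hd
        exact hv.2 ((h u hu.1 v hv.1 hd).symm.trans hu.2)
      · intro hd
        exact hv.2 ((h v hv.1 u hu.1 hd).trans hu.2)

/-- Dividing out a common factor `m` only changes the height, because
`n / (m * s) = (n / m) / s` for integer division. -/
lemma cnt_scale {n m : ℕ} (hm : 0 < m) (A : Finset ℕ) :
    cnt n (A.image (m * ·)) = cnt (n / m) A := by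
  unfold cnt
  have hmem : ∀ s, m * s ∈ A.image (m * ·) ↔ s ∈ A := by
    intro s
    simp [hm.ne']
  refine Set.ncard_congr (fun e _ s => e (m * s)) ?_ ?_ ?_
  · rintro e ⟨h0, h1, h2⟩
    refine ⟨fun s hs => h0 _ (by rwa [hmem]), fun s hs => ?_, fun s hs s' hs' hd hne => ?_⟩
    · rw [Nat.div_div_eq_div_mul]
      exact h1 _ ((hmem s).2 hs)
    · exact h2 _ ((hmem s).2 hs) _ ((hmem s').2 hs') (Nat.mul_dvd_mul_left _ hd)
        (by simpa [hm.ne'] using hne)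
  · intro e e' he he' h
    funext v
    by_cases hv : v ∈ A.image (m * ·)
    · obtain ⟨s, hs, rfl⟩ := Finset.mem_image.1 hv
      exact congrFun h s
    · rw [he.1 v hv, he'.1 v hv]
  · rintro e ⟨h0, h1, h2⟩
    refine ⟨fun v => if m ∣ v then e (v / m) else 0, ⟨?_, ?_, ?_⟩, ?_⟩
    · intro v hv
      by_cases hd : m ∣ v
      · obtain ⟨s, rfl⟩ := hd
        rw [hmem] at hv
        simp [h0 s hv, Nat.mul_div_cancel_left _ hm]
      · simp [hd]
    · intro v hv
      obtain ⟨s, hs, rfl⟩ := Finset.mem_image.1 hv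
      have := h1 s hs
      rw [Nat.div_div_eq_div_mul] at this
      simpa [Nat.mul_div_cancel_left _ hm] using this
    · intro u hu v hv hd hne
      obtain ⟨s, hs, rfl⟩ := Finset.mem_image.1 hu
      obtain ⟨s', hs', rfl⟩ := Finset.mem_image.1 hv
      have := h2 s hs s' hs' (Nat.dvd_of_mul_dvd_mul_left hm hd) (by rintro rfl; exact hne rfl)
      simpa [Nat.mul_div_cancel_left _ hm] using this
    · funext s
      simp [Nat.mul_div_cancel_left _ hm]

/-! ### Maximum primitive sets as labellings of the odd numbers -/

/-- The odd integers in `{1, …, n}`; there are `⌈n / 2⌉` of them. -/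
def odds (n : ℕ) : Finset ℕ := (Finset.Icc 1 n).filter Odd

lemma mem_odds {n v : ℕ} : v ∈ odds n ↔ (1 ≤ v ∧ v ≤ n) ∧ Odd v := by
  simp [odds]

lemma card_odds (n : ℕ) : (odds n).card = (n + 1) / 2 := by
  have : odds n = (Finset.range ((n + 1) / 2)).image (fun i => 2 * i + 1) := by
    ext v
    simp only [mem_odds, Finset.mem_image, Finset.mem_range]
    constructor
    · rintro ⟨h, k, rfl⟩
      exact ⟨k, by omega, rfl⟩
    · rintro ⟨k, hk, rfl⟩
      exact ⟨by omega, k, rfl⟩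
  rw [this, Finset.card_image_of_injective _ (fun a b h => by simpa using h), Finset.card_range]

lemma odd_mul_two_pow_inj {u v a b : ℕ} (hu : Odd u) (hv : Odd v)
    (h : u * 2 ^ a = v * 2 ^ b) : u = v ∧ a = b := by
  have huv : u ∣ v := (Nat.Coprime.dvd_of_dvd_mul_right
    (Nat.Coprime.pow_right b hu.coprime_two_right) (h ▸ Dvd.intro _ rfl))
  have hvu : v ∣ u := (Nat.Coprime.dvd_of_dvd_mul_right
    (Nat.Coprime.pow_right a hv.coprime_two_right) (h ▸ Dvd.intro _ rfl))
  have := Nat.dvd_antisymm huv hvu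
  subst this
  refine ⟨rfl, ?_⟩
  have h2 := Nat.eq_of_mul_eq_mul_left hu.pos h
  exact Nat.pow_right_injective le_rfl h2

lemma odd_mul_two_pow_dvd {u v a b : ℕ} (hu : Odd u) (hv : Odd v)
    (h : u * 2 ^ a ∣ v * 2 ^ b) : u ∣ v ∧ a ≤ b := by
  constructor
  · exact Nat.Coprime.dvd_of_dvd_mul_right
      (Nat.Coprime.pow_right b hu.coprime_two_right) ((Dvd.intro _ rfl).trans h)
  · have : 2 ^ a ∣ 2 ^ b := Nat.Coprime.dvd_of_dvd_mul_left
      (Nat.Coprime.pow_left a hv.coprime_two_left) ((Dvd.intro_left _ rfl).trans h)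
    exact (Nat.pow_dvd_pow_iff_le_right (by norm_num)).1 this

/-- A primitive set meets each chain `{v, 2 * v, 4 * v, …}`, `v` odd, at most once. The maximum size
`⌈n / 2⌉` is the number of chains, so a maximum set is `{v * 2 ^ e v}` with `v` over all odd numbers
up to `n`, and it is primitive exactly when `e` decreases strictly along divisibility. -/
lemma M_eq_cnt (n : ℕ) : M n = cnt n (odds n) := by
  have hM : M n = {S : Finset ℕ | S ⊆ Finset.Icc 1 n ∧ IsPrimitive S ∧
      S.card = (n + 1) / 2}.ncard := rfl
  rw [hM]
  unfold cnt
  symm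
  have hodd : ∀ v ∈ odds n, Odd v := fun v hv => (mem_odds.1 hv).2
  have hinj : ∀ e : ℕ → ℕ, Set.InjOn (fun v => v * 2 ^ e v) (odds n : Set ℕ) := by
    intro e u hu v hv h
    exact (odd_mul_two_pow_inj (hodd u hu) (hodd v hv) h).1
  refine Set.ncard_congr (fun e _ => (odds n).image (fun v => v * 2 ^ e v)) ?_ ?_ ?_
  · rintro e ⟨-, h1, h2⟩
    refine ⟨?_, ?_, ?_⟩
    · intro k hk
      obtain ⟨v, hv, rfl⟩ := Finset.mem_image.1 hk
      obtain ⟨⟨hv1, hv2⟩, -⟩ := mem_odds.1 hv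
      have h3 := h1 v hv
      have h4 : 2 ^ e v ≤ n / v :=
        Nat.pow_le_of_le_log (Nat.div_pos hv2 hv1).ne' h3
      rw [Nat.le_div_iff_mul_le hv1] at h4
      rw [Finset.mem_Icc]
      exact ⟨Nat.mul_pos hv1 (by positivity), by linarith [mul_comm v (2 ^ e v)]⟩
    · intro a ha b hb hab
      obtain ⟨u, hu, rfl⟩ := Finset.mem_image.1 ha
      obtain ⟨v, hv, rfl⟩ := Finset.mem_image.1 hb
      obtain ⟨hd, hle⟩ := odd_mul_two_pow_dvd (hodd u hu) (hodd v hv) hab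
      by_cases huv : u = v
      · rw [huv]
      · exact absurd (h2 u hu v hv hd huv) (by omega)
    · rw [Finset.card_image_of_injOn (hinj e), card_odds]
  · intro e e' he he' h
    funext v
    by_cases hv : v ∈ odds n
    · have h1 : v * 2 ^ e v ∈ (odds n).image (fun v => v * 2 ^ e' v) := by
        rw [← h]
        exact Finset.mem_image_of_mem _ hv
      obtain ⟨w, hw, hwv⟩ := Finset.mem_image.1 h1
      obtain ⟨rfl, h2⟩ := odd_mul_two_pow_inj (hodd w hw) (hodd v hv) hwv
      exact h2.symm
    · rw [he.1 v hv, he'.1 v hv]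
  · rintro S ⟨hS, hprim, hcard⟩
    have hdec : ∀ k ∈ S, ∃ v ∈ odds n, ∃ i, k = v * 2 ^ i := by
      intro k hk
      obtain ⟨hk1, hk2⟩ := Finset.mem_Icc.1 (hS hk)
      obtain ⟨i, v, hv, rfl⟩ := Nat.exists_eq_two_pow_mul_odd (n := k) (by omega)
      refine ⟨v, mem_odds.2 ⟨⟨hv.pos, le_trans (Nat.le_mul_of_pos_left _ (by positivity)) hk2⟩, hv⟩,
        i, mul_comm _ _⟩
    choose! o ho i hi using hdec
    -- a primitive set meets each class `{v, 2v, 4v, …}` at most once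
    have hoinj : Set.InjOn o (S : Set ℕ) := by
      intro k hk l hl hkl
      have hk' := hi k hk
      have hl' := hi l hl
      rcases le_total (i k) (i l) with h | h
      · apply hprim k hk l hl
        rw [hk', hl', hkl]
        exact Nat.mul_dvd_mul_left _ (pow_dvd_pow 2 h)
      · symm
        apply hprim l hl k hk
        rw [hk', hl', hkl]
        exact Nat.mul_dvd_mul_left _ (pow_dvd_pow 2 h)
    have himg : S.image o = odds n := by
      apply Finset.eq_of_subset_of_card_le
      · intro v hv
        obtain ⟨k, hk, rfl⟩ := Finset.mem_image.1 hv
        exact ho k hk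
      · rw [Finset.card_image_of_injOn hoinj, hcard, card_odds]
    have hsurj : ∀ v ∈ odds n, ∃ j, v * 2 ^ j ∈ S := by
      intro v hv
      rw [← himg] at hv
      obtain ⟨k, hk, rfl⟩ := Finset.mem_image.1 hv
      exact ⟨i k, (hi k hk) ▸ hk⟩
    choose! j hj using hsurj
    refine ⟨fun v => if v ∈ odds n then j v else 0, ⟨?_, ?_, ?_⟩, ?_⟩
    · intro v hv; simp [hv]
    · intro v hv
      obtain ⟨⟨hv1, hv2⟩, -⟩ := mem_odds.1 hv
      have h3 := (Finset.mem_Icc.1 (hS (hj v hv))).2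
      simp only [hv, if_true]
      apply Nat.le_log_of_pow_le (by norm_num)
      rw [Nat.le_div_iff_mul_le hv1]
      linarith [mul_comm v (2 ^ j v)]
    · intro u hu v hv hd hne
      simp only [hu, hv, if_true]
      by_contra hlt
      have h4 : u * 2 ^ j u ∣ v * 2 ^ j v := Nat.mul_dvd_mul hd (pow_dvd_pow 2 (by omega))
      have h5 := hprim _ (hj u hu) _ (hj v hv) h4
      exact hne (odd_mul_two_pow_inj (hodd u hu) (hodd v hv) h5).1
    · apply Finset.eq_of_subset_of_card_le
      · intro k hk
        obtain ⟨v, hv, rfl⟩ := Finset.mem_image.1 hk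
        simp only [hv, if_true]
        exact hj v hv
      · rw [Finset.card_image_of_injOn (hinj _), card_odds, hcard]

/-! ### Rough and smooth parts -/

/-- `m` is `t`-rough: no prime `p ≤ t` divides it. -/
def IsRough (t m : ℕ) : Prop := ∀ p : ℕ, p.Prime → p ≤ t → ¬ p ∣ m

/-- The largest `t`-rough divisor of `u`: the part of `u` made of primes exceeding `t`
(equal to `1` at `u = 0`). -/
def roughPart (t u : ℕ) : ℕ := (u.primeFactorsList.filter (fun p => t < p)).prod

/-- The largest `t`-smooth divisor of `u`: the part of `u` made of primes up to `t`
(equal to `1` at `u = 0`). -/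
def smoothPart (t u : ℕ) : ℕ := (u.primeFactorsList.filter (fun p => ¬ t < p)).prod

lemma smooth_mul_rough {t u : ℕ} (hu : u ≠ 0) : roughPart t u * smoothPart t u = u := by
  unfold roughPart smoothPart
  have h := (List.filter_append_perm (fun p => decide (t < p)) u.primeFactorsList).prod_eq
  rw [List.prod_append, Nat.prod_primeFactorsList hu] at h
  simpa only [decide_not] using h

/-- `Nat.smoothNumbers` bounds the primes strictly, so `t`-smooth means membership in
`Nat.smoothNumbers (t + 1)`. -/
lemma mem_smooth_iff {t s : ℕ} :
    s ∈ Nat.smoothNumbers (t + 1) ↔ s ≠ 0 ∧ ∀ p : ℕ, p.Prime → p ∣ s → p ≤ t := by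
  rw [Nat.mem_smoothNumbers]
  constructor
  · rintro ⟨h0, h⟩
    exact ⟨h0, fun p hp hd => Nat.lt_succ_iff.1 (h p ((Nat.mem_primeFactorsList h0).2 ⟨hp, hd⟩))⟩
  · rintro ⟨h0, h⟩
    refine ⟨h0, fun p hp => ?_⟩
    have := (Nat.mem_primeFactorsList h0).1 hp
    exact Nat.lt_succ_iff.2 (h p this.1 this.2)

lemma smoothPart_mem (t u : ℕ) : smoothPart t u ∈ Nat.smoothNumbers (t + 1) := by
  have h := Nat.prod_mem_smoothNumbers u (t + 1)
  have : smoothPart t u = (u.primeFactorsList.filter (fun p => p < t + 1)).prod := by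
    unfold smoothPart
    congr 1
    apply List.filter_congr
    intro p _
    simp
  rwa [this]

lemma roughPart_mul_smooth {t u s : ℕ} (hu : u ≠ 0) (hs : s ∈ Nat.smoothNumbers (t + 1)) :
    roughPart t (u * s) = roughPart t u := by
  obtain ⟨hs0, hs1⟩ := (Nat.mem_smoothNumbers).1 hs
  unfold roughPart
  rw [((Nat.perm_primeFactorsList_mul hu hs0).filter _).prod_eq, List.filter_append]
  have : s.primeFactorsList.filter (fun p => decide (t < p)) = [] := by
    rw [List.filter_eq_nil_iff]
    intro p hp
    have := hs1 p hp
    simp; omega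
  rw [this, List.append_nil]

lemma roughPart_of_rough {t m : ℕ} (hm : m ≠ 0) (h : IsRough t m) : roughPart t m = m := by
  unfold roughPart
  have : m.primeFactorsList.filter (fun p => decide (t < p)) = m.primeFactorsList := by
    rw [List.filter_eq_self]
    intro p hp
    have hp' := (Nat.mem_primeFactorsList hm).1 hp
    have : t < p := by
      by_contra hlt
      exact h p hp'.1 (by omega) hp'.2
    simpa using this
  rw [this, Nat.prod_primeFactorsList hm]

lemma isRough_roughPart (t u : ℕ) : IsRough t (roughPart t u) := by
  intro p hp hpt hd
  obtain ⟨q, hq, hpq⟩ := (hp.prime.dvd_prod_iff).1 hd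
  obtain ⟨hq1, hq2⟩ := List.mem_filter.1 hq
  have hqp := Nat.prime_of_mem_primeFactorsList hq1
  have := (Nat.prime_dvd_prime_iff_eq hp hqp).1 hpq
  subst this
  simp at hq2
  omega

lemma IsRough.odd {t m : ℕ} (ht : 2 ≤ t) (h : IsRough t m) : Odd m := by
  rw [← Nat.not_even_iff_odd, even_iff_two_dvd]
  exact h 2 Nat.prime_two ht

/-! ### Factorisation over rough parts -/

open Classical in
/-- The `t`-rough integers in `{1, …, n}`. -/
noncomputable def roughs (t n : ℕ) : Finset ℕ := (Finset.Icc 1 n).filter (IsRough t)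

lemma mem_roughs {t n m : ℕ} : m ∈ roughs t n ↔ (1 ≤ m ∧ m ≤ n) ∧ IsRough t m := by
  simp [roughs]

open Classical in
/-- The odd `t`-smooth integers in `(j / t, j]`. -/
noncomputable def W (t j : ℕ) : Finset ℕ :=
  (odds j).filter (fun s => s ∈ Nat.smoothNumbers (t + 1) ∧ j < s * t)

lemma mem_W {t j s : ℕ} : s ∈ W t j ↔
    ((1 ≤ s ∧ s ≤ j) ∧ Odd s) ∧ s ∈ Nat.smoothNumbers (t + 1) ∧ j < s * t := by
  simp [W, mem_odds]

/-- The contribution `λ_t(j)` of one rough part `m` with `⌊n / m⌋ = j` to `log (M n)`; it depends on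
`m` and `n` only through `j`. -/
noncomputable def lam (t j : ℕ) : ℝ := Real.log (cnt j (W t j))

/-- The odd integers in `(n / t, n]`. -/
def topOdds (t n : ℕ) : Finset ℕ := (odds n).filter (fun u => n < u * t)

/-- Inside `(n / t, n]` a multiple `v` of `u` has `v / u < t`, so `u` and `v` have the same `t`-rough
part `m`. The count thus factors over `m`, and after division by `m` the fibre of `m` is
`W t (n / m)`. -/
lemma log_cnt_topOdds {t : ℕ} (ht : 2 ≤ t) (n : ℕ) :
    Real.log (cnt n (topOdds t n)) = ∑ m ∈ roughs t n, lam t (n / m) := by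
  have hmem : ∀ u, u ∈ topOdds t n ↔ ((1 ≤ u ∧ u ≤ n) ∧ Odd u) ∧ n < u * t := by
    intro u; simp [topOdds, mem_odds]
  have key : cnt n (topOdds t n) = ∏ m ∈ roughs t n, cnt (n / m) (W t (n / m)) := by
    rw [cnt_fiber (roughPart t) (roughs t n)]
    · refine Finset.prod_congr rfl fun m hm => ?_
      obtain ⟨⟨hm1, hmn⟩, hr⟩ := mem_roughs.1 hm
      rw [← cnt_scale hm1]
      congr 1
      ext u
      simp only [Finset.mem_filter, Finset.mem_image, hmem, mem_W]
      constructor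
      · rintro ⟨⟨⟨⟨hu1, hun⟩, huo⟩, hut⟩, hru⟩
        have hsm := smooth_mul_rough (t := t) (u := u) (by omega)
        rw [hru] at hsm
        set s := smoothPart t u with hs
        have hs1 : 1 ≤ s := by
          rcases Nat.eq_zero_or_pos s with h | h
          · rw [h] at hsm; omega
          · exact h
        refine ⟨s, ⟨⟨⟨hs1, ?_⟩, ?_⟩, smoothPart_mem t u, ?_⟩, hsm⟩
        · rw [Nat.le_div_iff_mul_le hm1, mul_comm, hsm]; exact hun
        · rw [← hsm] at huo
          exact (Nat.odd_mul.1 huo).2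
        · rw [Nat.div_lt_iff_lt_mul hm1]
          calc n < u * t := hut
            _ = s * t * m := by rw [← hsm]; ring
      · rintro ⟨s, ⟨⟨⟨hs1, hsn⟩, hso⟩, hss, hst⟩, rfl⟩
        rw [Nat.le_div_iff_mul_le hm1] at hsn
        rw [Nat.div_lt_iff_lt_mul hm1] at hst
        refine ⟨⟨⟨⟨Nat.mul_pos hm1 hs1, by linarith [mul_comm s m]⟩,
          (hr.odd ht).mul hso⟩, ?_⟩, ?_⟩
        · calc n < s * t * m := hst
            _ = m * s * t := by ring
        · rw [roughPart_mul_smooth (by omega) hss, roughPart_of_rough (by omega) hr]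
    · intro v hv
      obtain ⟨⟨⟨hv1, hvn⟩, hvo⟩, hvt⟩ := (hmem v).1 hv
      have hsm := smooth_mul_rough (t := t) (u := v) (by omega)
      refine mem_roughs.2 ⟨⟨?_, ?_⟩, isRough_roughPart t v⟩
      · rcases Nat.eq_zero_or_pos (roughPart t v) with h | h
        · rw [h] at hsm; omega
        · exact h
      · exact (Nat.le_of_dvd hv1 (Dvd.intro _ hsm)).trans hvn
    · intro u hu v hv hd
      obtain ⟨⟨⟨hu1, hun⟩, huo⟩, hut⟩ := (hmem u).1 hu
      obtain ⟨⟨⟨hv1, hvn⟩, hvo⟩, hvt⟩ := (hmem v).1 hv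
      obtain ⟨k, rfl⟩ := hd
      -- the cofactor is smaller than `t`, hence `t`-smooth
      have hk : k < t := by
        have : u * k < u * t := by omega
        exact Nat.lt_of_mul_lt_mul_left this
      have hk0 : k ≠ 0 := by rintro rfl; simp at hv1
      refine (roughPart_mul_smooth (by omega) (mem_smooth_iff.2 ⟨hk0, fun p _ hd => ?_⟩)).symm
      exact (Nat.le_of_dvd (Nat.pos_of_ne_zero hk0) hd).trans hk.le
  rw [key, Nat.cast_prod, Real.log_prod]
  · rfl
  · intro m hm
    have : 0 < cnt (n / m) (W t (n / m)) := cnt_pos _ (fun v hv => (mem_W.1 hv).1.1)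
    positivity

lemma lam_nonneg (t j : ℕ) : 0 ≤ lam t j := Real.log_natCast_nonneg _

lemma lam_le (t j : ℕ) : lam t j ≤ (W t j).card * Real.log (Nat.log 2 t + 1) := by
  unfold lam
  have hW : ∀ v ∈ W t j, 0 < v ∧ v ≤ j := fun v hv => (mem_W.1 hv).1.1
  have h1 : cnt j (W t j) ≤ (Nat.log 2 t + 1) ^ (W t j).card := by
    refine (cnt_le_prod _ hW).trans ?_
    rw [← Finset.prod_const]
    refine Finset.prod_le_prod' fun s hs => ?_
    have h2 := (mem_W.1 hs).2.2
    have : j / s ≤ t := by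
      have := (Nat.div_lt_iff_lt_mul (hW s hs).1).2 (by rwa [mul_comm] at h2)
      omega
    exact Nat.succ_le_succ (Nat.log_mono_right this)
  have h0 := cnt_pos _ hW
  calc Real.log (cnt j (W t j)) ≤ Real.log (((Nat.log 2 t + 1 : ℕ) : ℝ) ^ (W t j).card) := by
        apply Real.log_le_log (by positivity)
        exact_mod_cast h1
    _ = _ := by rw [Real.log_pow]; push_cast; rfl

/-- Valid for every `k`: at `k = 0` both sides vanish by the conventions for `Nat.log` and
`Real.log`. -/
lemma log_natLog_le (k : ℕ) : Real.log (Nat.log 2 k + 1) ≤ 2 * Real.log k := by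
  have h1 : Real.log (Nat.log 2 k + 1) ≤ Nat.log 2 k := by
    have := Real.log_le_sub_one_of_pos (x := (Nat.log 2 k : ℝ) + 1) (by positivity)
    linarith
  rcases Nat.eq_zero_or_pos k with rfl | hk
  · simp
  have h2 : (Nat.log 2 k : ℝ) * Real.log 2 ≤ Real.log k := by
    rw [← Real.log_pow]
    apply Real.log_le_log (by positivity)
    exact_mod_cast Nat.pow_log_le_self 2 hk.ne'
  have h3 := Real.log_two_gt_d9
  have h4 : (0 : ℝ) ≤ Nat.log 2 k := by positivity
  nlinarith

/-- The sum is `log (Y ^ N / N!)`, and `Y ^ N / N!` is one term of the series of `exp Y`. -/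
lemma sum_log_div_le {Y : ℝ} (hY : 0 ≤ Y) (N : ℕ) :
    ∑ u ∈ Finset.Icc 1 N, Real.log (Y / u) ≤ Y := by
  rcases hY.eq_or_lt with rfl | hY
  · simp
  rw [← Real.log_prod (by
    intro u hu
    have := (Finset.mem_Icc.1 hu).1
    positivity)]
  rw [Finset.prod_div_distrib, Finset.prod_const, Nat.card_Icc, Nat.add_sub_cancel,
    ← Nat.cast_prod, show Finset.Icc 1 N = Finset.Ico 1 (N + 1) by ext; simp,
    Finset.prod_Ico_id_eq_factorial]
  have h := Real.pow_div_factorial_le_exp Y hY.le N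
  calc _ ≤ Real.log (Real.exp Y) := Real.log_le_log (by positivity) h
    _ = Y := Real.log_exp Y

/-- Ignoring the odd numbers `u ≤ n / t` costs `O(n * log t / t)` in `log (M n)`: such a label takes
at most `1 + log₂ (n / u)` values, and these are controlled on average by `sum_log_div_le`. -/
lemma log_M_sub {t : ℕ} (ht : 2 ≤ t) (n : ℕ) :
    |Real.log (M n) - ∑ m ∈ roughs t n, lam t (n / m)| ≤ 2 * (n / t) * (1 + Real.log t) := by
  rw [← log_cnt_topOdds ht, M_eq_cnt]
  have ht0 : 0 < t := by omega
  set B := (odds n).filter (fun u => ¬ n < u * t) with hB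
  have hBm : ∀ u ∈ B, (0 < u ∧ u ≤ n) ∧ u ≤ n / t := by
    intro u hu
    simp only [hB, Finset.mem_filter, mem_odds, not_lt] at hu
    exact ⟨hu.1.1, (Nat.le_div_iff_mul_le ht0).2 hu.2⟩
  have hA : ∀ v ∈ topOdds t n, (0 < v ∧ v ≤ n) ∧ n / t < v := by
    intro v hv
    simp only [topOdds, Finset.mem_filter, mem_odds] at hv
    exact ⟨hv.1.1, (Nat.div_lt_iff_lt_mul ht0).2 hv.2⟩
  have hU : odds n = B ∪ topOdds t n := by
    rw [Finset.union_comm]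
    exact (Finset.filter_union_filter_not_eq _ _).symm
  obtain ⟨h1, h2⟩ := cnt_bounds (n := n) (N := n / t) B (topOdds t n)
    (fun u hu => ⟨(hBm u hu).1.1, (hBm u hu).2, (hBm u hu).1.2⟩)
    (fun v hv => ⟨(hA v hv).2, (hA v hv).1.2⟩)
  rw [← hU] at h1 h2
  have hp : 0 < cnt n (topOdds t n) := cnt_pos _ (fun v hv => (hA v hv).1)
  have hp' : (0 : ℝ) < cnt n (topOdds t n) := by exact_mod_cast hp
  have h3 : Real.log (cnt n (topOdds t n)) ≤ Real.log (cnt n (odds n)) :=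
    Real.log_le_log hp' (by exact_mod_cast h1)
  rw [abs_of_nonneg (by linarith)]
  have h4 : Real.log (cnt n (odds n)) ≤ Real.log (cnt n (topOdds t n)) +
      ∑ u ∈ B, Real.log (Nat.log 2 (n / u) + 1) := by
    rw [← Real.log_prod (fun u _ => by positivity), ← Real.log_mul hp'.ne' (by positivity)]
    apply Real.log_le_log (lt_of_lt_of_le hp' (by exact_mod_cast h1))
    exact_mod_cast h2
  have h5 : ∑ u ∈ B, Real.log (Nat.log 2 (n / u) + 1) ≤
      ∑ u ∈ Finset.Icc 1 (n / t), 2 * (Real.log t + Real.log ((n / t : ℝ) / u)) := by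
    refine (Finset.sum_le_sum_of_subset_of_nonneg (t := Finset.Icc 1 (n / t)) ?_ ?_).trans
      (Finset.sum_le_sum ?_)
    · intro u hu
      exact Finset.mem_Icc.2 ⟨(hBm u hu).1.1, (hBm u hu).2⟩
    · intro u _ _
      exact Real.log_nonneg (by linarith [(Nat.cast_nonneg (Nat.log 2 (n / u)) : (0:ℝ) ≤ _)])
    · intro u hu
      obtain ⟨hu1, hu2⟩ := Finset.mem_Icc.1 hu
      have hun : u * t ≤ n := (Nat.le_div_iff_mul_le ht0).1 hu2
      have hun' : u ≤ n := le_trans (Nat.le_mul_of_pos_right _ ht0) hun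
      have hn0 : 0 < n := by omega
      refine (log_natLog_le _).trans ?_
      have h6 : Real.log ((n / u : ℕ) : ℝ) ≤ Real.log ((n : ℝ) / u) := by
        apply Real.log_le_log
        · exact_mod_cast Nat.div_pos hun' hu1
        · exact Nat.cast_div_le
      have h7 : Real.log t + Real.log ((n / t : ℝ) / u) = Real.log ((n : ℝ) / u) := by
        rw [← Real.log_mul (by positivity) (by positivity)]
        congr 1
        field_simp
      rw [h7]
      linarith
  have h8 := sum_log_div_le (Y := (n / t : ℝ)) (by positivity) (n / t)
  have h9 : ((n / t : ℕ) : ℝ) ≤ (n / t : ℝ) := Nat.cast_div_le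
  have h10 : 0 ≤ Real.log t := Real.log_natCast_nonneg _
  rw [← Finset.mul_sum, Finset.sum_add_distrib, Finset.sum_const, Nat.card_Icc,
    Nat.add_sub_cancel, nsmul_eq_mul] at h5
  nlinarith [mul_le_mul_of_nonneg_right h9 h10]

/-! ### Reciprocals of primes and of smooth numbers -/

/-- The sum of `1 / p` over the primes `p ≤ t`. -/
noncomputable def recipSum (t : ℕ) : ℝ := ∑ p ∈ (t + 1).primesBelow, (1 / p : ℝ)

lemma recipSum_nonneg (t : ℕ) : 0 ≤ recipSum t := Finset.sum_nonneg fun p _ => by positivity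

lemma recipSum_mono {s t : ℕ} (h : s ≤ t) : recipSum s ≤ recipSum t := by
  unfold recipSum
  refine Finset.sum_le_sum_of_subset_of_nonneg ?_ (fun p _ _ => by positivity)
  intro p hp
  rw [Nat.mem_primesBelow] at hp ⊢
  exact ⟨by omega, hp.2⟩

/-- Chebyshev's bound `θ(x) ≤ x * log 4` shows that the primes of the dyadic block
`(2 ^ k, 2 ^ (k + 1)]` contribute at most `4 / k`. -/
lemma recipSum_two_pow (k : ℕ) : recipSum (2 ^ (k + 1)) ≤ 1 / 2 + 4 * harmonic k := by
  induction k with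
  | zero =>
    have : (2 ^ (0 + 1) + 1).primesBelow = {2} := by decide
    rw [recipSum, this]
    norm_num
  | succ k ih =>
    have hsub : (2 ^ (k + 1) + 1).primesBelow ⊆ (2 ^ (k + 1 + 1) + 1).primesBelow := by
      intro p hp
      rw [Nat.mem_primesBelow] at hp ⊢
      refine ⟨hp.1.trans_le ?_, hp.2⟩
      have : 2 ^ (k + 1) ≤ 2 ^ (k + 1 + 1) := Nat.pow_le_pow_right (by norm_num) (by omega)
      omega
    have hl2 : 0 < Real.log 2 := Real.log_pos (by norm_num)
    have hD : (0 : ℝ) < 2 ^ (k + 1) * ((k + 1) * Real.log 2) := by positivity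
    -- primes `p ≥ 2 ^ (k + 1)` have `1 / p ≤ log p / (2 ^ (k + 1) * log (2 ^ (k + 1)))`
    have h1 : recipSum (2 ^ (k + 1 + 1)) - recipSum (2 ^ (k + 1)) ≤
        Chebyshev.theta ((2 ^ (k + 2) : ℕ) : ℝ) / (2 ^ (k + 1) * ((k + 1) * Real.log 2)) := by
      unfold recipSum
      rw [← Finset.sum_sdiff hsub, add_sub_cancel_right, Chebyshev.theta_eq_sum_primesLE_log,
        Finset.sum_div]
      refine (Finset.sum_le_sum ?_).trans
        (Finset.sum_le_sum_of_subset_of_nonneg Finset.sdiff_subset ?_)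
      · intro p hp
        simp only [Finset.mem_sdiff, Nat.mem_primesBelow, not_and] at hp
        have hpp := hp.1.2
        have hp2 : 2 ^ (k + 1) < p := by
          by_contra h
          exact hp.2 (by omega) hpp
        have hp3 : (2 : ℝ) ^ (k + 1) ≤ p := by exact_mod_cast hp2.le
        have hp4 : (k + 1) * Real.log 2 ≤ Real.log p := by
          have := Real.log_le_log (by positivity) hp3
          rw [Real.log_pow] at this
          exact_mod_cast this
        have hp0 : (0 : ℝ) < p := by exact_mod_cast hpp.pos
        rw [div_le_div_iff₀ hp0 hD]
        have h5 : 0 ≤ (k + 1) * Real.log 2 := by positivity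
        calc 1 * ((2 : ℝ) ^ (k + 1) * ((k + 1) * Real.log 2)) ≤ p * Real.log p := by
              rw [one_mul]; exact mul_le_mul hp3 hp4 h5 hp0.le
          _ = _ := mul_comm _ _
      · intro p _ _
        exact div_nonneg (Real.log_natCast_nonneg _) hD.le
    have h2 := Chebyshev.theta_le_log4_mul_x (x := ((2 ^ (k + 2) : ℕ) : ℝ)) (by positivity)
    have h4 : Real.log 4 = 2 * Real.log 2 := by
      rw [show (4 : ℝ) = 2 ^ 2 by norm_num, Real.log_pow]; norm_num
    have h3 : Chebyshev.theta ((2 ^ (k + 2) : ℕ) : ℝ) / (2 ^ (k + 1) * ((k + 1) * Real.log 2)) ≤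
        4 * ((k : ℝ) + 1)⁻¹ := by
      rw [div_le_iff₀ hD]
      refine h2.trans (le_of_eq ?_)
      rw [h4]
      push_cast
      field_simp
      ring
    rw [harmonic_succ]
    push_cast
    linarith

/-- The upper half of Mertens' second theorem, with a poor constant: the growth `O(log log t)` is all
that is needed. -/
lemma recipSum_le {t : ℕ} (ht : 2 ≤ t) : recipSum t ≤ 8 + 4 * Real.log (Real.log t) := by
  have h1 : recipSum t ≤ recipSum (2 ^ (Nat.log 2 t + 1)) :=
    recipSum_mono (Nat.lt_pow_succ_log_self (by norm_num) t).le
  have h2 := recipSum_two_pow (Nat.log 2 t)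
  have h3 := harmonic_le_one_add_log (Nat.log 2 t)
  have h4 : (Nat.log 2 t : ℝ) * Real.log 2 ≤ Real.log t := by
    rw [← Real.log_pow]
    apply Real.log_le_log (by positivity)
    exact_mod_cast Nat.pow_log_le_self 2 (by omega)
  have hk : 0 < Nat.log 2 t := Nat.log_pos (by norm_num) ht
  have hk' : (0 : ℝ) < Nat.log 2 t := by exact_mod_cast hk
  have h5 := Real.log_two_gt_d9
  have h5' := Real.log_two_lt_d9
  have h6 : (Nat.log 2 t : ℝ) ≤ 2 * Real.log t := by nlinarith
  have h7 : Real.log (Nat.log 2 t) ≤ Real.log 2 + Real.log (Real.log t) := by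
    rw [← Real.log_mul (by norm_num) (by nlinarith)]
    exact Real.log_le_log hk' h6
  linarith

lemma inv_one_sub_le_exp {v : ℝ} (h0 : 0 ≤ v) (h1 : v ≤ 3 / 4) : (1 - v)⁻¹ ≤ Real.exp (4 * v) := by
  have h2 := Real.add_one_le_exp (4 * v)
  refine le_trans ?_ h2
  rw [inv_le_iff_one_le_mul₀ (by linarith)]
  nlinarith

/-- Rankin's trick: for `t`-smooth `s > D` one has `1 / s ≤ D ^ (-σ) * s ^ (σ - 1)`, and the sum of
`s ^ (σ - 1)` over all `t`-smooth numbers is an Euler product over the primes up to `t`. -/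
lemma rankin {t : ℕ} {D σ : ℝ} (hD : 0 < D) (hσ : 0 ≤ σ) (hσ' : σ ≤ 1 / 2)
    (F : Finset ℕ) (hF : ∀ s ∈ F, s ∈ Nat.smoothNumbers (t + 1) ∧ D < s) :
    ∑ s ∈ F, (1 / s : ℝ) ≤ D ^ (-σ) * Real.exp (4 * ((t : ℝ) ^ σ * recipSum t)) := by
  let f : ℕ →* ℝ :=
    { toFun := fun s => (s : ℝ) ^ (σ - 1)
      map_one' := by simp
      map_mul' := fun a b => by
        push_cast
        exact Real.mul_rpow (by positivity) (by positivity) }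
  have hf : ∀ s, f s = (s : ℝ) ^ (σ - 1) := fun s => rfl
  have hf0 : ∀ s, 0 ≤ f s := fun s => by rw [hf]; positivity
  have hle : ∀ p : ℕ, p.Prime → f p ≤ 3 / 4 := by
    intro p hp
    have hp2 : (2 : ℝ) ≤ p := by exact_mod_cast hp.two_le
    rw [hf]
    calc (p : ℝ) ^ (σ - 1) ≤ (p : ℝ) ^ (-(1 / 2) : ℝ) :=
          Real.rpow_le_rpow_of_exponent_le (by linarith) (by linarith)
      _ ≤ (2 : ℝ) ^ (-(1 / 2) : ℝ) :=
          Real.rpow_le_rpow_of_nonpos (by norm_num) hp2 (by norm_num)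
      _ ≤ 3 / 4 := by
          rw [Real.rpow_neg (by norm_num), ← Real.sqrt_eq_rpow, inv_le_comm₀ (by positivity)
            (by norm_num)]
          apply Real.le_sqrt_of_sq_le
          norm_num
  obtain ⟨hs1, hs2⟩ := EulerProduct.summable_and_hasSum_smoothNumbers_prod_primesBelow_geometric
    (f := f) (fun {p} hp => by
      rw [Real.norm_of_nonneg (hf0 p)]
      linarith [hle p hp]) (t + 1)
  have hsum : ∑ s ∈ F, f s ≤ ∏ p ∈ (t + 1).primesBelow, (1 - f p)⁻¹ := by
    have h := sum_le_hasSum (F.subtype (· ∈ Nat.smoothNumbers (t + 1)))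
      (fun i _ => hf0 i) hs2
    rwa [Finset.sum_subtype_of_mem (fun s => f s) (fun s hs => (hF s hs).1)] at h
  have hprod : ∏ p ∈ (t + 1).primesBelow, (1 - f p)⁻¹ ≤
      Real.exp (4 * ((t : ℝ) ^ σ * recipSum t)) := by
    rw [recipSum, Finset.mul_sum, Finset.mul_sum, Real.exp_sum]
    refine Finset.prod_le_prod ?_ ?_
    · intro p hp
      have := hle p (Nat.prime_of_mem_primesBelow hp)
      exact inv_nonneg.2 (by linarith)
    · intro p hp
      obtain ⟨hpt, hpp⟩ := Nat.mem_primesBelow.1 hp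
      refine (inv_one_sub_le_exp (hf0 p) (hle p hpp)).trans ?_
      rw [Real.exp_le_exp, hf]
      have hp0 : (0 : ℝ) < p := by exact_mod_cast hpp.pos
      rw [Real.rpow_sub_one hp0.ne', mul_one_div]
      have : (p : ℝ) ^ σ ≤ (t : ℝ) ^ σ :=
        Real.rpow_le_rpow hp0.le (by exact_mod_cast Nat.lt_succ_iff.1 hpt) hσ
      gcongr
  calc ∑ s ∈ F, (1 / s : ℝ) ≤ ∑ s ∈ F, D ^ (-σ) * f s := by
        refine Finset.sum_le_sum fun s hs => ?_
        have hDs := (hF s hs).2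
        have hs0 : (0 : ℝ) < s := hD.trans hDs
        rw [hf, Real.rpow_sub_one hs0.ne', ← mul_div_assoc]
        gcongr
        rw [Real.rpow_neg hD.le, inv_mul_eq_div, one_le_div (by positivity)]
        exact Real.rpow_le_rpow hD.le hDs.le hσ
    _ = D ^ (-σ) * ∑ s ∈ F, f s := by rw [Finset.mul_sum]
    _ ≤ _ := by gcongr; exact hsum.trans hprod

/-! ### Brun's pure sieve -/

/-- The `i`-th elementary symmetric function of the reciprocals of the primes `p ≤ t`. -/
noncomputable def elemSum (t i : ℕ) : ℝ :=
  ∑ T ∈ (t + 1).primesBelow.powersetCard i, ∏ p ∈ T, (1 / p : ℝ)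

/-- Rankin's trick again: `z ^ r * elemSum t r` is one part of the expansion of
`∏ p ≤ t, (1 + z / p)`. -/
lemma elemSum_le (t r : ℕ) {z : ℝ} (hz : 0 < z) :
    elemSum t r ≤ z⁻¹ ^ r * Real.exp (z * recipSum t) := by
  have h1 : z ^ r * elemSum t r ≤ Real.exp (z * recipSum t) := by
    calc z ^ r * elemSum t r =
        ∑ T ∈ (t + 1).primesBelow.powersetCard r, ∏ p ∈ T, (z * (1 / p : ℝ)) := by
          rw [elemSum, Finset.mul_sum]
          refine Finset.sum_congr rfl fun T hT => ?_
          rw [Finset.prod_mul_distrib, Finset.prod_const, (Finset.mem_powersetCard.1 hT).2]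
      _ ≤ ∑ T ∈ (t + 1).primesBelow.powerset, ∏ p ∈ T, (z * (1 / p : ℝ)) := by
          refine Finset.sum_le_sum_of_subset_of_nonneg ?_
            (fun T _ _ => Finset.prod_nonneg fun p _ => by positivity)
          intro T hT
          exact Finset.mem_powerset.2 (Finset.mem_powersetCard.1 hT).1
      _ = ∏ p ∈ (t + 1).primesBelow, (1 + z * (1 / p : ℝ)) := (Finset.prod_one_add _).symm
      _ ≤ Real.exp (∑ p ∈ (t + 1).primesBelow, z * (1 / p : ℝ)) :=
          Real.prod_one_add_le_exp_sum _ (fun p => by positivity)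
      _ = _ := by rw [recipSum, Finset.mul_sum]
  rw [inv_pow, inv_mul_eq_div, le_div_iff₀ (by positivity), mul_comm]
  exact h1

lemma card_primesBelow_le (t : ℕ) : (t + 1).primesBelow.card ≤ t := by
  have : (t + 1).primesBelow ⊆ Finset.Icc 1 t := by
    intro p hp
    obtain ⟨h1, h2⟩ := Nat.mem_primesBelow.1 hp
    exact Finset.mem_Icc.2 ⟨h2.pos, by omega⟩
  simpa using Finset.card_le_card this

/-- There are at most `3 * t ^ r` sets of at most `r` primes up to `t`: weight a set `T` by
`t ^ (r - #T) ≥ 1` and use `(1 + 1 / t) ^ t ≤ e`. -/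
lemma sum_choose_le {t : ℕ} (ht : 1 ≤ t) (r : ℕ) :
    (∑ i ∈ Finset.range (r + 1), ((t + 1).primesBelow.powersetCard i).card : ℝ) ≤
      3 * (t : ℝ) ^ r := by
  have ht' : (1 : ℝ) ≤ t := by exact_mod_cast ht
  set P := (t + 1).primesBelow
  have h1 : (∑ i ∈ Finset.range (r + 1), ((P.powersetCard i).card : ℝ)) ≤
      ∑ T ∈ P.powerset, (t : ℝ) ^ r * ∏ p ∈ T, (1 / t : ℝ) := by
    have hd : Set.PairwiseDisjoint (↑(Finset.range (r + 1))) (fun i => P.powersetCard i) :=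
      fun i _ j _ hij => Finset.pairwise_disjoint_powersetCard P hij
    rw [← Nat.cast_sum, ← Finset.card_biUnion hd, Finset.card_eq_sum_ones, Nat.cast_sum]
    refine (Finset.sum_le_sum ?_).trans (Finset.sum_le_sum_of_subset_of_nonneg ?_ ?_)
    · intro T hT
      obtain ⟨i, hi, hT⟩ := Finset.mem_biUnion.1 hT
      have hi' : i ≤ r := by simpa [Nat.lt_succ_iff] using hi
      rw [Finset.prod_const, (Finset.mem_powersetCard.1 hT).2, one_div, inv_pow, Nat.cast_one,
        ← div_eq_mul_inv, one_le_div (by positivity)]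
      exact pow_le_pow_right₀ ht' hi'
    · intro T hT
      obtain ⟨i, hi, hT⟩ := Finset.mem_biUnion.1 hT
      exact Finset.mem_powerset.2 (Finset.mem_powersetCard.1 hT).1
    · intro T _ _
      exact mul_nonneg (by positivity) (Finset.prod_nonneg fun p _ => by positivity)
  refine h1.trans ?_
  rw [← Finset.mul_sum, ← Finset.prod_one_add, mul_comm]
  gcongr
  calc ∏ p ∈ P, (1 + (1 / t : ℝ)) ≤ Real.exp (∑ p ∈ P, (1 / t : ℝ)) :=
        Real.prod_one_add_le_exp_sum _ (fun p => by positivity)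
    _ ≤ Real.exp 1 := by
        rw [Real.exp_le_exp, Finset.sum_const, nsmul_eq_mul, mul_one_div,
          div_le_one (by positivity)]
        exact_mod_cast card_primesBelow_le t
    _ ≤ 3 := by linarith [Real.exp_one_lt_d9]

/-- Bonferroni's inequality: the inclusion-exclusion sum that detects `q = 0`, cut after `i = r`,
is off by at most the last term kept. -/
lemma bonferroni (q r : ℕ) :
    |(if q = 0 then 1 else 0 : ℝ) - ∑ i ∈ Finset.range (r + 1), (-1) ^ i * (q.choose i : ℝ)| ≤
      q.choose r := by
  cases q with
  | zero =>
    have : ∑ i ∈ Finset.range (r + 1), (-1 : ℝ) ^ i * ((0 : ℕ).choose i : ℝ) = 1 := by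
      rw [Finset.sum_range_succ']
      simp
    rw [this]
    simp
  | succ q =>
    have h := Int.alternating_sum_range_choose_eq_choose (n := q) (m := r)
    have h' : ∑ i ∈ Finset.range (r + 1), (-1 : ℝ) ^ i * ((q + 1).choose i : ℝ) =
        (-1) ^ r * q.choose r := by exact_mod_cast h
    rw [h']
    simp only [Nat.add_eq_zero_iff, one_ne_zero, and_false, if_false, zero_sub, abs_neg, abs_mul,
      abs_pow, abs_one, one_pow, one_mul, Nat.abs_cast]
    exact_mod_cast Nat.choose_le_choose r (Nat.le_succ q)

/-- The approximate density of the `t`-rough integers given by inclusion-exclusion cut after products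
of `r` primes. -/
noncomputable def sieveDensity (t r : ℕ) : ℝ :=
  ∑ i ∈ Finset.range (r + 1), (-1) ^ i * elemSum t i

lemma prod_primes_dvd_iff {t m : ℕ} {T : Finset ℕ} (hT : T ⊆ (t + 1).primesBelow) :
    ∏ p ∈ T, p ∣ m ↔ T ⊆ (t + 1).primesBelow.filter (· ∣ m) := by
  constructor
  · intro h p hp
    exact Finset.mem_filter.2 ⟨hT hp, (Finset.dvd_prod_of_mem _ hp).trans h⟩
  · intro h
    exact Finset.prod_primes_dvd m
      (fun p hp => (Nat.prime_of_mem_primesBelow (hT hp)).prime)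
      (fun p hp => (Finset.mem_filter.1 (h hp)).2)

lemma card_powersetCard_filter (t i m : ℕ) :
    (((t + 1).primesBelow.powersetCard i).filter (fun T => ∏ p ∈ T, p ∣ m)).card =
      ((t + 1).primesBelow.filter (· ∣ m)).card.choose i := by
  rw [← Finset.card_powersetCard]
  congr 1
  ext T
  simp only [Finset.mem_filter, Finset.mem_powersetCard]
  constructor
  · rintro ⟨⟨h1, h2⟩, h3⟩
    exact ⟨(prod_primes_dvd_iff h1).1 h3, h2⟩
  · rintro ⟨h1, h2⟩
    have h3 := h1.trans (Finset.filter_subset _ _)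
    exact ⟨⟨h3, h2⟩, (prod_primes_dvd_iff h3).2 h1⟩

open Classical in
/-- Brun's pure sieve. A set `I` that behaves like an interval of length `y`, in that it contains
`y / e + O(1)` multiples of each `e`, contains about `sieveDensity t r * y` integers that are
`t`-rough. -/
lemma brun_sieve {t : ℕ} (ht : 1 ≤ t) (r : ℕ) (I : Finset ℕ) {y : ℝ}
    (hI : ∀ e : ℕ, 0 < e → |((I.filter (e ∣ ·)).card : ℝ) - y / e| ≤ 1) :
    |((I.filter (IsRough t)).card : ℝ) - sieveDensity t r * y| ≤
      y * elemSum t r + 6 * (t : ℝ) ^ r := by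
  set P := (t + 1).primesBelow with hP
  -- the number of pairs `(m, T)` with `m ∈ I` divisible by the `i` primes in `T`
  let N : ℕ → ℝ := fun i => ∑ T ∈ P.powersetCard i, ((I.filter (∏ p ∈ T, p ∣ ·)).card : ℝ)
  have hN : ∀ i, N i = ∑ m ∈ I, ((P.filter (· ∣ m)).card.choose i : ℝ) := by
    intro i
    simp only [N, hP, ← card_powersetCard_filter]
    simp only [Finset.card_filter, Nat.cast_sum]
    rw [Finset.sum_comm]
  have hNe : ∀ i, |N i - y * elemSum t i| ≤ (P.powersetCard i).card := by
    intro i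
    simp only [N, elemSum, Finset.mul_sum]
    rw [← Finset.sum_sub_distrib]
    refine (Finset.abs_sum_le_sum_abs _ _).trans ?_
    rw [Finset.card_eq_sum_ones, Nat.cast_sum]
    refine Finset.sum_le_sum fun T hT => ?_
    have hT' := (Finset.mem_powersetCard.1 hT).1
    have := hI (∏ p ∈ T, p)
      (Finset.prod_pos fun p hp => (Nat.prime_of_mem_primesBelow (hT' hp)).pos)
    simpa [div_eq_mul_inv, Finset.prod_inv_distrib] using this
  have h1 : |((I.filter (IsRough t)).card : ℝ) - ∑ i ∈ Finset.range (r + 1), (-1) ^ i * N i| ≤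
      N r := by
    have : ((I.filter (IsRough t)).card : ℝ) - ∑ i ∈ Finset.range (r + 1), (-1) ^ i * N i =
        ∑ m ∈ I, ((if (P.filter (· ∣ m)).card = 0 then 1 else 0 : ℝ) -
          ∑ i ∈ Finset.range (r + 1), (-1) ^ i * ((P.filter (· ∣ m)).card.choose i : ℝ)) := by
      rw [Finset.sum_sub_distrib, Finset.sum_comm]
      congr 1
      · rw [Finset.card_filter, Nat.cast_sum]
        refine Finset.sum_congr rfl fun m _ => ?_
        have : IsRough t m ↔ (P.filter (· ∣ m)).card = 0 := by
          rw [Finset.card_eq_zero, Finset.filter_eq_empty_iff]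
          constructor
          · intro h p hp
            obtain ⟨h1, h2⟩ := Nat.mem_primesBelow.1 hp
            exact h p h2 (by omega)
          · intro h p hp hpt
            exact h (Nat.mem_primesBelow.2 ⟨by omega, hp⟩)
        simp [this]
      · refine Finset.sum_congr rfl fun i _ => ?_
        rw [hN, Finset.mul_sum]
    rw [this, hN]
    exact (Finset.abs_sum_le_sum_abs _ _).trans (Finset.sum_le_sum fun m _ => bonferroni _ _)
  have h2 : |∑ i ∈ Finset.range (r + 1), (-1) ^ i * N i - sieveDensity t r * y| ≤
      3 * (t : ℝ) ^ r := by
    have : ∑ i ∈ Finset.range (r + 1), (-1) ^ i * N i - sieveDensity t r * y =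
        ∑ i ∈ Finset.range (r + 1), (-1) ^ i * (N i - y * elemSum t i) := by
      rw [sieveDensity, Finset.sum_mul, ← Finset.sum_sub_distrib]
      exact Finset.sum_congr rfl fun i _ => by ring
    rw [this]
    refine (Finset.abs_sum_le_sum_abs _ _).trans (le_trans (Finset.sum_le_sum fun i _ => ?_)
      (sum_choose_le ht r))
    rw [abs_mul, abs_pow, abs_neg, abs_one, one_pow, one_mul]
    exact hNe i
  have h3 : N r ≤ y * elemSum t r + 3 * (t : ℝ) ^ r := by
    have h4 := (abs_le.1 (hNe r)).2
    have h5 : ((P.powersetCard r).card : ℝ) ≤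
        ∑ i ∈ Finset.range (r + 1), ((P.powersetCard i).card : ℝ) :=
      Finset.single_le_sum (f := fun i => ((P.powersetCard i).card : ℝ))
        (fun i _ => by positivity) (by simp)
    have h6 := sum_choose_le ht r
    linarith
  calc _ ≤ _ := abs_sub_le _ (∑ i ∈ Finset.range (r + 1), (-1) ^ i * N i) _
    _ ≤ _ := by linarith

/-! ### A linear approximation to `log (M n)` -/

lemma card_Ioc_dvd {a b e : ℕ} (hab : a ≤ b) :
    ((Finset.Ioc a b).filter (e ∣ ·)).card + a / e = b / e := by
  rw [← Nat.Ioc_filter_dvd_card_eq_div b e, ← Nat.Ioc_filter_dvd_card_eq_div a e,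
    ← Finset.card_union_of_disjoint, ← Finset.filter_union]
  · congr 2
    ext x
    simp only [Finset.mem_union, Finset.mem_Ioc]
    omega
  · apply Finset.disjoint_filter_filter
    rw [Finset.disjoint_left]
    intro x hx hx'
    rw [Finset.mem_Ioc] at hx hx'
    omega

/-- The integers `m` with `⌊n / m⌋ = j` (see `mem_block`) form an interval of length
`n / (j * (j + 1))`, to which the sieve applies. -/
lemma block_dvd (n : ℕ) {j : ℕ} (hj : 0 < j) (e : ℕ) (he : 0 < e) :
    |(((Finset.Ioc (n / (j + 1)) (n / j)).filter (e ∣ ·)).card : ℝ) -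
      (n / (j * (j + 1)) : ℝ) / e| ≤ 1 := by
  have h := card_Ioc_dvd (e := e) (Nat.div_le_div_left (a := n) (Nat.le_succ j) hj)
  rw [Nat.div_div_eq_div_mul, Nat.div_div_eq_div_mul] at h
  have h' : (((Finset.Ioc (n / (j + 1)) (n / j)).filter (e ∣ ·)).card : ℝ) +
      ((n / ((j + 1) * e) : ℕ) : ℝ) = ((n / (j * e) : ℕ) : ℝ) := by exact_mod_cast h
  have key : (n / (j * (j + 1)) : ℝ) / e = n / (j * e) - n / ((j + 1) * e) := by
    have hj' : (0 : ℝ) < j := by exact_mod_cast hj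
    have he' : (0 : ℝ) < e := by exact_mod_cast he
    field_simp
    ring
  have h1 := Nat.cast_div_le (m := n) (n := j * e) (α := ℝ)
  have h2 := Nat.cast_div_le (m := n) (n := (j + 1) * e) (α := ℝ)
  have h3 := Nat.lt_floor_add_one ((n : ℝ) / ((j * e : ℕ) : ℝ))
  have h4 := Nat.lt_floor_add_one ((n : ℝ) / (((j + 1) * e : ℕ) : ℝ))
  rw [Nat.floor_div_eq_div] at h3 h4
  push_cast at h1 h2 h3 h4 h'
  rw [key, abs_le]
  constructor <;> linarith

lemma mem_block {n m j : ℕ} (hm : 0 < m) (hj : 0 < j) :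
    n / m = j ↔ m ∈ Finset.Ioc (n / (j + 1)) (n / j) := by
  rw [Finset.mem_Ioc, Nat.div_lt_iff_lt_mul (by omega), Nat.le_div_iff_mul_le hj,
    Nat.div_eq_iff hm]
  constructor
  · rintro ⟨h1, h2⟩
    have : (j + 1) * m = j * m + m := by ring
    constructor
    · rw [mul_comm m]; omega
    · rw [mul_comm m]; exact h1
  · rintro ⟨h1, h2⟩
    have : (j + 1) * m = j * m + m := by ring
    rw [mul_comm m] at h1 h2
    omega

/-- The approximation to `lim (log (M n) / n)` obtained from the rough parts `m` with `n / m ≤ J`.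
It does not depend on `n`. -/
noncomputable def densityConst (t r J : ℕ) : ℝ :=
  sieveDensity t r * ∑ j ∈ Finset.Icc 1 J, lam t j * (1 / (j * (j + 1)) : ℝ)

lemma card_W_le (t j : ℕ) : (W t j).card ≤ j := by
  have : W t j ⊆ Finset.Icc 1 j := fun s hs => Finset.mem_Icc.2 (mem_W.1 hs).1.1
  simpa using Finset.card_le_card this

lemma lam_le_log (t j : ℕ) : lam t j ≤ (W t j).card * (2 * Real.log t) :=
  (lam_le t j).trans (mul_le_mul_of_nonneg_left (log_natLog_le t) (by positivity))

/-- The rough parts `m` with `n / m > D * t` contribute little. Such an `m` contributes through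
`t`-smooth numbers `s ∈ (n / (m * t), n / m]`, which exceed `D`, and each `s` occurs for at most
`n / s` values of `m`; the sum of `n / s` is then bounded by `rankin`. -/
lemma tail_le {t D n : ℕ} {σ : ℝ} (hD : 0 < D) (hσ : 0 ≤ σ)
    (hσ' : σ ≤ 1 / 2) :
    ∑ m ∈ (roughs t n).filter (fun m => ¬ n / m ≤ D * t), lam t (n / m) ≤
      n * (2 * Real.log t * ((D : ℝ) ^ (-σ) * Real.exp (4 * ((t : ℝ) ^ σ * recipSum t)))) := by
  classical
  have hL : 0 ≤ Real.log t := Real.log_natCast_nonneg _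
  set R := (roughs t n).filter (fun m => ¬ n / m ≤ D * t) with hR
  let F := (Finset.Icc 1 n).filter (fun s => s ∈ Nat.smoothNumbers (t + 1) ∧ D < s)
  have hcount : (∑ m ∈ R, ((W t (n / m)).card : ℝ)) ≤ ∑ s ∈ F, (n / s : ℝ) := by
    have h1 : ∀ m ∈ R, ((W t (n / m)).card : ℝ) =
        ∑ s ∈ F, (if s ∈ W t (n / m) then 1 else 0 : ℝ) := by
      intro m hm
      simp only [hR, Finset.mem_filter, mem_roughs, not_le] at hm
      rw [← Finset.sum_filter, Finset.sum_const, nsmul_eq_mul, mul_one]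
      congr 2
      ext s
      simp only [F, Finset.mem_filter, Finset.mem_Icc]
      constructor
      · intro hs
        have hs' := mem_W.1 hs
        refine ⟨⟨⟨hs'.1.1.1, hs'.1.1.2.trans (Nat.div_le_self _ _)⟩, hs'.2.1, ?_⟩, hs⟩
        exact Nat.lt_of_mul_lt_mul_right (hm.2.trans hs'.2.2)
      · exact fun h => h.2
    rw [Finset.sum_congr rfl h1, Finset.sum_comm]
    refine Finset.sum_le_sum fun s hs => ?_
    have hs1 : 0 < s := by
      simp only [F, Finset.mem_filter, Finset.mem_Icc] at hs
      omega
    rw [← Finset.sum_filter, Finset.sum_const, nsmul_eq_mul, mul_one]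
    refine le_trans ?_ (Nat.cast_div_le (m := n) (n := s) (α := ℝ))
    have : R.filter (fun m => s ∈ W t (n / m)) ⊆ Finset.Icc 1 (n / s) := by
      intro m hm
      simp only [hR, Finset.mem_filter, mem_roughs, mem_W] at hm
      obtain ⟨⟨⟨⟨hm1, hm2⟩, -⟩, -⟩, ⟨⟨-, h⟩, -⟩, -⟩ := hm
      rw [Nat.le_div_iff_mul_le hm1] at h
      rw [Finset.mem_Icc, Nat.le_div_iff_mul_le hs1, mul_comm]
      exact ⟨hm1, h⟩
    exact_mod_cast (by simpa using Finset.card_le_card this)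
  have hrank := rankin (t := t) (D := D) (by exact_mod_cast hD) hσ hσ' F (by
    intro s hs
    simp only [F, Finset.mem_filter] at hs
    exact ⟨hs.2.1, by exact_mod_cast hs.2.2⟩)
  calc ∑ m ∈ R, lam t (n / m) ≤ ∑ m ∈ R, ((W t (n / m)).card : ℝ) * (2 * Real.log t) :=
        Finset.sum_le_sum fun m _ => lam_le_log _ _
    _ = (∑ m ∈ R, ((W t (n / m)).card : ℝ)) * (2 * Real.log t) := by rw [Finset.sum_mul]
    _ ≤ (∑ s ∈ F, (n / s : ℝ)) * (2 * Real.log t) := by gcongr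
    _ = n * (2 * Real.log t * ∑ s ∈ F, (1 / s : ℝ)) := by
        rw [show ∑ s ∈ F, (n / s : ℝ) = n * ∑ s ∈ F, (1 / s : ℝ) by
          rw [Finset.mul_sum]; exact Finset.sum_congr rfl fun s _ => by ring]
        ring
    _ ≤ _ := by gcongr

/-- The rough parts `m` with `n / m ≤ J` are grouped by the value `j = ⌊n / m⌋`, and each group is
counted with Brun's sieve. -/
lemma main_part {t r J n : ℕ} (ht : 1 ≤ t) {z : ℝ} (hz : 0 < z) :
    |∑ m ∈ (roughs t n).filter (fun m => n / m ≤ J), lam t (n / m) - densityConst t r J * n| ≤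
      n * (2 * Real.log t * ((1 + Real.log J) * (z⁻¹ ^ r * Real.exp (z * recipSum t)))) +
        2 * Real.log t * (J ^ 2 * (6 * (t : ℝ) ^ r)) := by
  classical
  have hL : 0 ≤ Real.log t := Real.log_natCast_nonneg _
  have h1 : ∑ m ∈ (roughs t n).filter (fun m => n / m ≤ J), lam t (n / m) =
      ∑ j ∈ Finset.Icc 1 J, lam t j *
        (((Finset.Ioc (n / (j + 1)) (n / j)).filter (IsRough t)).card : ℝ) := by
    rw [← Finset.sum_fiberwise_of_maps_to (t := Finset.Icc 1 J) (g := fun m => n / m)]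
    · refine Finset.sum_congr rfl fun j hj => ?_
      obtain ⟨hj1, hj2⟩ := Finset.mem_Icc.1 hj
      rw [Finset.sum_congr rfl (g := fun _ => lam t j)
        (fun m hm => by rw [(Finset.mem_filter.1 hm).2]), Finset.sum_const, nsmul_eq_mul, mul_comm]
      congr 3
      ext m
      simp only [Finset.mem_filter, mem_roughs]
      constructor
      · rintro ⟨⟨⟨⟨hm1, -⟩, hr⟩, -⟩, h⟩
        exact ⟨(mem_block hm1 hj1).1 h, hr⟩
      · rintro ⟨hm, hr⟩
        have hm1 : 1 ≤ m := by
          exact Nat.zero_lt_of_lt (Finset.mem_Ioc.1 hm).1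
        have hm2 := (Finset.mem_Ioc.1 hm).2
        have h := (mem_block hm1 hj1).2 hm
        exact ⟨⟨⟨⟨hm1, hm2.trans (Nat.div_le_self _ _)⟩, hr⟩, by omega⟩, h⟩
    · intro m hm
      simp only [Finset.mem_filter, mem_roughs] at hm
      exact Finset.mem_Icc.2 ⟨Nat.div_pos hm.1.1.2 hm.1.1.1, hm.2⟩
  have h2 : densityConst t r J * n = ∑ j ∈ Finset.Icc 1 J, lam t j *
      (sieveDensity t r * (n / (j * (j + 1)) : ℝ)) := by
    rw [densityConst, Finset.mul_sum, Finset.sum_mul]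
    exact Finset.sum_congr rfl fun j _ => by ring
  set E := z⁻¹ ^ r * Real.exp (z * recipSum t) with hE
  have hE0 : 0 ≤ E := by positivity
  rw [h1, h2, ← Finset.sum_sub_distrib]
  refine (Finset.abs_sum_le_sum_abs _ _).trans ?_
  have h3 : ∀ j ∈ Finset.Icc 1 J, |lam t j *
        (((Finset.Ioc (n / (j + 1)) (n / j)).filter (IsRough t)).card : ℝ) -
        lam t j * (sieveDensity t r * (n / (j * (j + 1)) : ℝ))| ≤
      n * (2 * Real.log t) * E * (j : ℝ)⁻¹ + 2 * Real.log t * (J * (6 * (t : ℝ) ^ r)) := by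
    intro j hj
    obtain ⟨hj1, hj2⟩ := Finset.mem_Icc.1 hj
    have hj0 : (0 : ℝ) < j := by exact_mod_cast hj1
    have hjJ : (j : ℝ) ≤ J := by exact_mod_cast hj2
    rw [← mul_sub, abs_mul, abs_of_nonneg (lam_nonneg t j)]
    have h4 := brun_sieve ht r (Finset.Ioc (n / (j + 1)) (n / j)) (block_dvd n hj1)
    have h5 := elemSum_le t r hz
    have h6 : lam t j ≤ j * (2 * Real.log t) :=
      (lam_le_log t j).trans (by gcongr; exact card_W_le t j)
    calc lam t j * _ ≤ (j * (2 * Real.log t)) *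
          ((n / (j * (j + 1)) : ℝ) * E + 6 * (t : ℝ) ^ r) := by
            refine mul_le_mul h6 (h4.trans ?_) (abs_nonneg _) (by positivity)
            gcongr
      _ = n * (2 * Real.log t) * E * (1 / (j + 1) : ℝ) +
          2 * Real.log t * (j * (6 * (t : ℝ) ^ r)) := by field_simp
      _ ≤ _ := by
          have h7 : (1 / (j + 1) : ℝ) ≤ (j : ℝ)⁻¹ := by
            rw [one_div]
            exact inv_anti₀ hj0 (by linarith)
          gcongr
  refine (Finset.sum_le_sum h3).trans ?_
  rw [Finset.sum_add_distrib, ← Finset.mul_sum, Finset.sum_const, Nat.card_Icc,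
    Nat.add_sub_cancel, nsmul_eq_mul]
  have h8 : ∑ j ∈ Finset.Icc 1 J, (j : ℝ)⁻¹ ≤ 1 + Real.log J := by
    have := harmonic_le_one_add_log J
    rw [harmonic_eq_sum_Icc] at this
    push_cast at this
    exact this
  have h9 : n * (2 * Real.log t) * E * ∑ j ∈ Finset.Icc 1 J, (j : ℝ)⁻¹ ≤
      n * (2 * Real.log t) * E * (1 + Real.log J) := by gcongr
  refine (add_le_add_left h9 _).trans (le_of_eq ?_)
  ring

/-- The quantitative core: `log (M n)` is a constant independent of `n` times `n`, up to four errors,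
namely the neglected odd numbers up to `n / t`, the large smooth numbers, the truncation of the sieve
and its rounding. -/
lemma master {t r D n : ℕ} (ht : 2 ≤ t) (hD : 0 < D) {z σ : ℝ} (hz : 0 < z) (hσ : 0 ≤ σ)
    (hσ' : σ ≤ 1 / 2) :
    |Real.log (M n) - densityConst t r (D * t) * n| ≤
      n * (2 * (1 + Real.log t) / t) +
      n * (2 * Real.log t * ((D : ℝ) ^ (-σ) * Real.exp (4 * ((t : ℝ) ^ σ * recipSum t)))) +
      n * (2 * Real.log t * ((1 + Real.log (D * t)) * (z⁻¹ ^ r * Real.exp (z * recipSum t)))) +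
      2 * Real.log t * ((D * t) ^ 2 * (6 * (t : ℝ) ^ r)) := by
  have h1 := log_M_sub ht n
  have h2 := tail_le (t := t) (n := n) hD hσ hσ'
  have h3 := main_part (t := t) (r := r) (J := D * t) (n := n) (by omega) hz
  rw [← Finset.sum_filter_add_sum_filter_not (roughs t n) (fun m => n / m ≤ D * t)] at h1
  have h4 : 0 ≤ ∑ m ∈ (roughs t n).filter (fun m => ¬ n / m ≤ D * t), lam t (n / m) :=
    Finset.sum_nonneg fun m _ => lam_nonneg _ _
  have h5 : 2 * (n / t : ℝ) * (1 + Real.log t) = n * (2 * (1 + Real.log t) / t) := by ring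
  rw [h5] at h1
  push_cast at h3
  rw [abs_le] at h1 h3 ⊢
  constructor <;> linarith [h1.1, h1.2, h3.1, h3.2]

/-! ### Choice of parameters -/

/-- The growth conditions on `x = log n` needed for the choice of parameters. -/
lemma eventually_params {δ η : ℝ} (hδ : 0 < δ) (hδ' : δ < 1 / 2) (hη : 0 < η) :
    ∀ᶠ x : ℝ in Filter.atTop, 1 ≤ Real.log x ∧ 1 ≤ x ∧
      48 * (x ^ (1 / 2 - δ) * Real.log x) + 20 * Real.log x + 20 ≤
        η * √(x * Real.log x) ∧
      20 * √(x * Real.log x) + 20 * Real.log x + 20 ≤ δ * x := by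
  have h1 := (isLittleO_log_rpow_atTop hδ).bound (show 0 < η / 88 by positivity)
  have h2 := Real.isLittleO_log_id_atTop.bound (show 0 < (δ / 60) ^ 2 by positivity)
  filter_upwards [h1, h2, Real.tendsto_log_atTop.eventually_ge_atTop 1,
    Filter.eventually_ge_atTop 1] with x h1 h2 hy hx
  rw [Real.norm_of_nonneg (by linarith), Real.norm_of_nonneg (by positivity)] at h1
  rw [Real.norm_of_nonneg (by linarith), id, Real.norm_of_nonneg (by linarith)] at h2
  set y := Real.log x with hy'
  have hx0 : 0 < x := by linarith
  refine ⟨hy, hx, ?_, ?_⟩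
  · have hz : 1 ≤ x ^ (1 / 2 - δ) := Real.one_le_rpow hx (by linarith)
    have h3 : √x ≤ √(x * y) := Real.sqrt_le_sqrt (by nlinarith)
    have h4 : x ^ (1 / 2 - δ) * x ^ δ = √x := by
      rw [← Real.rpow_add hx0, Real.sqrt_eq_rpow]
      congr 1; ring
    have h5 : x ^ (1 / 2 - δ) * y ≤ η / 88 * √x := by
      calc x ^ (1 / 2 - δ) * y ≤ x ^ (1 / 2 - δ) * (η / 88 * x ^ δ) := by gcongr
        _ = η / 88 * √x := by rw [← h4]; ring
    have h6 : y ≤ x ^ (1 / 2 - δ) * y := by nlinarith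
    nlinarith
  · have h3 : √(x * y) ≤ δ / 60 * x := by
      apply Real.sqrt_le_iff.2
      constructor
      · positivity
      · nlinarith
    have h4 : y ≤ √(x * y) := by
      apply Real.le_sqrt_of_sq_le
      have : y ≤ x := (Real.log_le_sub_one_of_pos hx0).trans (by linarith)
      nlinarith
    linarith

set_option maxHeartbeats 1000000 in
/-- The parameters of `master` are chosen in terms of `x = log n` and `y = log x` by
`t = exp (κ * √(x * y))`, `D = n ^ a`, `r = a * x / log t`, `σ = θ * y / log t`, `z = x ^ θ`, up to
rounding, with `a = 1 / 3 - ε / 2`, `θ = 1 / 2 - ε / 2` and `κ ^ 2 = 1 / 6 - ε / 2`.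
Then `t ^ σ ≤ z` is `o(√x)`, and both `D ^ (-σ)` and `z ^ (-r)` are about
`exp (-a * θ * x * y / log t)`. Since `a * θ ≥ κ ^ 2`, both are at most about `1 / t`, while
`a < 1 / 3` keeps the rounding error of the sieve, of order `D ^ 3 * t ^ 2`, below `n`.
The constant `A` obtained from `n` serves for all `n' ≥ n`. -/
lemma uniform_approx {ε : ℝ} (hε : 0 < ε) (hε' : ε < 1 / 6) :
    ∃ N : ℕ, ∀ n : ℕ, N ≤ n → 1 ≤ n ∧ ∃ A : ℝ, ∀ n' : ℕ, n ≤ n' →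
      |Real.log (M n') - A * n'| ≤
        n' * (4 * Real.exp (-√((1 / 6 - ε) * Real.log n * Real.log (Real.log n)))) := by
  set δ : ℝ := ε / 2 with hδ
  have hδ0 : 0 < δ := by positivity
  have hδ1 : δ < 1 / 12 := by rw [hδ]; linarith
  set κ : ℝ := √(1 / 6 - δ) with hκ
  set q : ℝ := √(1 / 6 - ε) with hq
  have hq0 : 0 < q := Real.sqrt_pos.2 (by linarith)
  have hqκ : q < κ := Real.sqrt_lt_sqrt (by linarith) (by linarith)
  have hκ0 : 0 < κ := hq0.trans hqκ
  have hκ2 : κ ^ 2 = 1 / 6 - δ := Real.sq_sqrt (by linarith)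
  have hκ1 : κ ≤ 1 := by nlinarith
  have hev := (Real.tendsto_log_atTop.comp tendsto_natCast_atTop_atTop).eventually
    (eventually_params (δ := δ) (η := κ - q) hδ0 (by linarith) (by linarith))
  obtain ⟨N, hN⟩ := Filter.eventually_atTop.1 hev
  refine ⟨max N 1, fun n hn => ?_⟩
  have hn1 : 1 ≤ n := (le_max_right _ _).trans hn
  obtain ⟨hy, hx, hG1, hG2⟩ := hN n ((le_max_left _ _).trans hn)
  simp only [Function.comp_apply] at hy hx hG1 hG2
  refine ⟨hn1, ?_⟩
  set x := Real.log n with hxdef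
  set y := Real.log x with hydef
  have hexpx : Real.exp x = n := Real.exp_log (by exact_mod_cast hn1)
  have hx0 : 0 < x := by linarith
  have hexpy : Real.exp y = x := Real.exp_log hx0
  set X := √(x * y) with hX
  have hX2 : X ^ 2 = x * y := Real.sq_sqrt (by positivity)
  have hyx : y ≤ x := (Real.log_le_sub_one_of_pos hx0).trans (by linarith)
  have hX0 : 0 < X := Real.sqrt_pos.2 (by positivity)
  have hXx : X ≤ x := by
    apply Real.sqrt_le_iff.2
    exact ⟨hx0.le, by nlinarith⟩
  have hgoal : √((1 / 6 - ε) * x * y) = q * X := by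
    rw [mul_assoc, Real.sqrt_mul (by linarith)]
  rw [hgoal]
  -- `clear_value` hides the definitions once their consequences are recorded: unfolding them would
  -- make the arithmetic below very slow
  clear hgoal hev hN hn
  clear_value X y x q κ
  set θ : ℝ := 1 / 2 - δ with hθ
  set a : ℝ := 1 / 3 - δ with ha
  have hθ0 : 0 < θ := by rw [hθ]; linarith
  have ha0 : 0 < a := by rw [ha]; linarith
  have haθ : κ ^ 2 ≤ a * θ := by rw [hκ2, ha, hθ]; nlinarith
  set z : ℝ := x ^ θ with hz
  have hz0 : 0 < z := by positivity
  have hzexp : z = Real.exp (θ * y) := by rw [hz, Real.rpow_def_of_pos hx0, mul_comm, hydef]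
  clear_value z θ a δ
  have hzy : 0 ≤ z * y := by positivity
  set τ : ℝ := κ * X with hτ
  have hqX : 0 < q * X := by positivity
  have hη : (κ - q) * X = τ - q * X := by rw [hτ]; ring
  rw [hη] at hG1
  have hτX : τ ≤ X := mul_le_of_le_one_left hX0.le hκ1
  clear_value τ
  have hτ40 : 40 ≤ τ := by linarith
  have hτ0 : 0 < τ := by linarith
  have hτx : τ ≤ x := hτX.trans hXx
  -- the choice of `κ` makes both saving exponents at least `τ`
  have hsave : τ ≤ a * θ * (x * y / τ) := by
    rw [mul_div_assoc', le_div_iff₀ hτ0, ← hX2, hτ]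
    nlinarith [mul_le_mul_of_nonneg_right haθ (sq_nonneg X)]
  set t := ⌊Real.exp τ⌋₊ with ht
  have hexpτ : 40 ≤ Real.exp τ := by linarith [Real.add_one_le_exp τ]
  have htle : (t : ℝ) ≤ Real.exp τ := Nat.floor_le (by positivity)
  have htge : Real.exp τ / 2 ≤ t := by
    have := Nat.lt_floor_add_one (Real.exp τ)
    rw [← ht] at this
    linarith
  clear_value t
  have ht2' : (2 : ℝ) ≤ t := by linarith
  have ht2 : 2 ≤ t := by exact_mod_cast ht2'
  have ht0 : (0 : ℝ) < t := by linarith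
  have hlt : Real.log t ≤ τ := by
    rw [← Real.log_exp τ]
    exact Real.log_le_log ht0 htle
  have hlt0 : 0 < Real.log t := Real.log_pos (by linarith)
  have hltx : Real.log t ≤ x := hlt.trans hτx
  set D := ⌈Real.exp (a * x)⌉₊ with hD
  have hexpax : 1 ≤ Real.exp (a * x) := Real.one_le_exp (by positivity)
  have hDge : Real.exp (a * x) ≤ D := Nat.le_ceil _
  have hDle : (D : ℝ) ≤ 2 * Real.exp (a * x) := by
    have := Nat.ceil_lt_add_one (Real.exp_pos (a * x)).le
    rw [← hD] at this
    linarith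
  clear_value D
  have hD0' : (0 : ℝ) < D := by linarith
  have hD0 : 0 < D := by exact_mod_cast hD0'
  set r := ⌊a * x / τ⌋₊ with hr
  have hrle : (r : ℝ) ≤ a * x / τ := Nat.floor_le (by positivity)
  have hrge : a * x / τ - 1 ≤ r := by linarith [Nat.lt_floor_add_one (a * x / τ)]
  clear_value r
  set σ : ℝ := θ * y / τ with hσ
  have hσ0 : 0 ≤ σ := by positivity
  clear_value σ
  have hσ1 : σ ≤ 1 / 2 := by
    rw [hσ, div_le_iff₀ hτ0]
    have h1 : θ ≤ 1 := by rw [hθ]; linarith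
    have h2 : θ * y ≤ y := mul_le_of_le_one_left (by linarith) h1
    linarith
  have hS : recipSum t ≤ 12 * y := by
    have h1 := recipSum_le ht2
    have h2 : Real.log (Real.log t) ≤ y := hydef ▸ Real.log_le_log hlt0 hltx
    linarith
  have hS0 := recipSum_nonneg t
  have htσ : (t : ℝ) ^ σ ≤ z := by
    rw [hzexp, show θ * y = τ * σ by rw [hσ]; field_simp, Real.exp_mul]
    exact Real.rpow_le_rpow ht0.le htle hσ0
  have hl2 : Real.log 2 ≤ 1 := by linarith [Real.log_two_lt_d9]
  have hexp2 : (2 : ℝ) ≤ Real.exp 1 := by linarith [Real.add_one_le_exp (1 : ℝ)]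
  have hexp8 : (8 : ℝ) ≤ Real.exp 3 := by
    have : Real.exp 3 = Real.exp 1 ^ 3 := by rw [← Real.exp_nat_mul]; norm_num
    rw [this]
    calc (8 : ℝ) = 2 ^ 3 := by norm_num
      _ ≤ _ := by gcongr
  have hexp48 : (48 : ℝ) ≤ Real.exp 6 := by
    have : Real.exp 6 = Real.exp 1 ^ 6 := by rw [← Real.exp_nat_mul]; norm_num
    rw [this]
    calc (48 : ℝ) ≤ 2 ^ 6 := by norm_num
      _ ≤ _ := by gcongr
  refine ⟨densityConst t r (D * t), fun n' hn' => ?_⟩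
  have hn'1 : (0 : ℝ) ≤ n' := by positivity
  -- with these parameters the first three error terms of `master` are each at most
  -- `n' * exp (-q * X)`; the last one is too, because `n ≤ n'`
  have hE1 : 2 * (1 + Real.log t) / t ≤ Real.exp (-(q * X)) := by
    calc 2 * (1 + Real.log t) / t ≤ 2 * (x + x) / (Real.exp τ / 2) := by gcongr
      _ = 8 * x * Real.exp (-τ) := by rw [Real.exp_neg]; field_simp; ring
      _ ≤ Real.exp 3 * Real.exp y * Real.exp (-τ) := by rw [hexpy]; gcongr
      _ = Real.exp (3 + y + -τ) := by rw [Real.exp_add, Real.exp_add]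
      _ ≤ _ := by rw [Real.exp_le_exp]; linarith
  have hE2 : 2 * Real.log t * ((D : ℝ) ^ (-σ) * Real.exp (4 * ((t : ℝ) ^ σ * recipSum t))) ≤
      Real.exp (-(q * X)) := by
    have h1 : (D : ℝ) ^ (-σ) ≤ Real.exp (-τ) := by
      calc (D : ℝ) ^ (-σ) ≤ Real.exp (a * x) ^ (-σ) :=
            Real.rpow_le_rpow_of_nonpos (Real.exp_pos _) hDge (by linarith)
        _ = Real.exp (-(a * θ * (x * y / τ))) := by
            rw [← Real.exp_mul, hσ]
            congr 1
            ring
        _ ≤ _ := by rw [Real.exp_le_exp]; linarith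
    calc _ ≤ 2 * x * (Real.exp (-τ) * Real.exp (4 * (z * (12 * y)))) := by gcongr
      _ ≤ Real.exp 1 * Real.exp y * (Real.exp (-τ) * Real.exp (4 * (z * (12 * y)))) := by
          rw [hexpy]; gcongr
      _ = Real.exp (1 + y + (-τ + 4 * (z * (12 * y)))) := by simp only [Real.exp_add]
      _ ≤ _ := by rw [Real.exp_le_exp]; linarith
  have hE3 : 2 * Real.log t * ((1 + Real.log (D * t)) *
      (z⁻¹ ^ r * Real.exp (z * recipSum t))) ≤ Real.exp (-(q * X)) := by
    have h1 : 1 + Real.log (D * t) ≤ 4 * x := by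
      rw [Real.log_mul hD0'.ne' ht0.ne']
      have h2 : Real.log D ≤ Real.log 2 + a * x := by
        rw [← Real.log_exp (a * x), ← Real.log_mul (by norm_num) (Real.exp_pos _).ne']
        exact Real.log_le_log hD0' hDle
      have h3 : a ≤ 1 := by rw [ha]; linarith
      have h4 : a * x ≤ x := mul_le_of_le_one_left hx0.le h3
      linarith
    have h0 : 0 ≤ Real.log (D * t) :=
      Real.log_nonneg (one_le_mul_of_one_le_of_one_le (by linarith) (by linarith))
    have h2 : z⁻¹ ^ r ≤ Real.exp (y - τ) := by
      rw [hzexp, ← Real.exp_neg, ← Real.exp_nat_mul, Real.exp_le_exp]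
      have h3 : θ * y * (a * x / τ - 1) ≤ θ * y * r := by gcongr
      have h4 : θ * y * (a * x / τ - 1) = a * θ * (x * y / τ) - θ * y := by ring
      have h5 : θ * y ≤ y := by
        have : θ ≤ 1 := by rw [hθ]; linarith
        exact mul_le_of_le_one_left (by linarith) this
      linarith
    calc _ ≤ 2 * x * ((4 * x) * (Real.exp (y - τ) * Real.exp (z * (12 * y)))) := by gcongr
      _ = 8 * x * x * (Real.exp (y - τ) * Real.exp (z * (12 * y))) := by ring
      _ ≤ Real.exp 3 * Real.exp y * Real.exp y *
          (Real.exp (y - τ) * Real.exp (z * (12 * y))) := by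
          rw [hexpy]; gcongr
      _ = Real.exp (3 + y + y + (y - τ + z * (12 * y))) := by simp only [Real.exp_add]
      _ ≤ _ := by rw [Real.exp_le_exp]; linarith
  have hE4 : 2 * Real.log t * ((D * t : ℝ) ^ 2 * (6 * (t : ℝ) ^ r)) ≤
      n' * Real.exp (-(q * X)) := by
    have h1 : (t : ℝ) ^ r ≤ Real.exp (a * x) := by
      calc (t : ℝ) ^ r ≤ Real.exp τ ^ r := by gcongr
        _ = Real.exp (r * τ) := by rw [← Real.exp_nat_mul]
        _ ≤ _ := by
          rw [Real.exp_le_exp]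
          rwa [le_div_iff₀ hτ0] at hrle
    have h2 : (n : ℝ) ≤ n' := by exact_mod_cast hn'
    calc _ ≤ 2 * x * ((2 * Real.exp (a * x) * Real.exp τ) ^ 2 * (6 * Real.exp (a * x))) := by
          gcongr
      _ = 48 * x * (Real.exp (a * x) * Real.exp (a * x) * Real.exp (a * x) * Real.exp τ *
          Real.exp τ) := by ring
      _ ≤ Real.exp 6 * Real.exp y * (Real.exp (a * x) * Real.exp (a * x) * Real.exp (a * x) *
          Real.exp τ * Real.exp τ) := by rw [hexpy]; gcongr
      _ = Real.exp (6 + y + (a * x + a * x + a * x + τ + τ)) := by simp only [Real.exp_add]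
      _ ≤ Real.exp (x + -(q * X)) := by
          rw [Real.exp_le_exp, ha]
          linarith
      _ = n * Real.exp (-(q * X)) := by rw [Real.exp_add, hexpx]
      _ ≤ _ := by gcongr
  refine (master (r := r) (n := n') ht2 hD0 hz0 hσ0 hσ1).trans ?_
  have h1 := mul_le_mul_of_nonneg_left hE1 hn'1
  have h2 := mul_le_mul_of_nonneg_left hE2 hn'1
  have h3 := mul_le_mul_of_nonneg_left hE3 hn'1
  linarith

/-! ### The limit -/

lemma two_le_cnt_singleton {n u : ℕ} (hu : 0 < u) (hun : 2 * u ≤ n) : 2 ≤ cnt n {u} := by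
  have h : 1 < (Lab n {u}).ncard := by
    rw [Set.one_lt_ncard (Lab_finite n _)]
    refine ⟨fun _ => 0, ⟨by simp, by simp, ?_⟩, fun v => if v = u then 1 else 0,
      ⟨?_, ?_, ?_⟩, ?_⟩
    · intro a ha b hb _ hab
      simp only [Finset.mem_singleton] at ha hb
      exact absurd (ha.trans hb.symm) hab
    · intro v hv
      simpa using hv
    · intro v hv
      simp only [Finset.mem_singleton] at hv
      subst hv
      simp only [if_true]
      apply Nat.log_pos (by norm_num)
      rwa [Nat.le_div_iff_mul_le hu]
    · intro a ha b hb _ hab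
      simp only [Finset.mem_singleton] at ha hb
      exact absurd (ha.trans hb.symm) hab
    · intro h
      have := congrFun h u
      simp at this
  exact h

/-- The odd numbers in `(4 * k, 12 * k]` do not divide one another, and the `k` of them below
`6 * k` each have at least two admissible labels. -/
lemma two_pow_le_M (k : ℕ) : 2 ^ k ≤ M (12 * k) := by
  rw [M_eq_cnt]
  set n := 12 * k with hn
  set A := (odds n).filter (fun u => 4 * k < u) with hA
  have hAm : ∀ u ∈ A, ((1 ≤ u ∧ u ≤ n) ∧ Odd u) ∧ 4 * k < u := by
    intro u hu
    simpa [hA, mem_odds] using hu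
  have h1 : cnt n A ≤ cnt n (odds n) := by
    have := (cnt_bounds (n := n) (N := 4 * k) ((odds n).filter (fun u => ¬ 4 * k < u)) A
      (by
        intro u hu
        simp only [Finset.mem_filter, mem_odds] at hu
        omega)
      (fun v hv => ⟨(hAm v hv).2, (hAm v hv).1.1.2⟩)).1
    rwa [Finset.union_comm, hA, Finset.filter_union_filter_not_eq] at this
  refine le_trans ?_ h1
  rw [cnt_fiber id A A (fun v hv => hv)]
  · have hsub : (Finset.range k).image (fun i => 4 * k + 2 * i + 1) ⊆ A := by
      intro u hu
      obtain ⟨i, hi, rfl⟩ := Finset.mem_image.1 hu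
      rw [Finset.mem_range] at hi
      simp only [hA, Finset.mem_filter, mem_odds]
      exact ⟨⟨by omega, 2 * k + i, by ring⟩, by omega⟩
    have hsing : ∀ c ∈ A, A.filter (fun v => id v = c) = {c} := by
      intro c hc
      ext v
      simp only [id, Finset.mem_filter, Finset.mem_singleton]
      exact ⟨fun h => h.2, fun h => ⟨h ▸ hc, h⟩⟩
    rw [Finset.prod_congr rfl (fun c hc => by rw [hsing c hc])]
    calc 2 ^ k = ∏ u ∈ (Finset.range k).image (fun i => 4 * k + 2 * i + 1), 2 := by
          rw [Finset.prod_const, Finset.card_image_of_injective _ (fun a b h => by simpa using h),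
            Finset.card_range]
      _ ≤ ∏ u ∈ (Finset.range k).image (fun i => 4 * k + 2 * i + 1), cnt n {u} := by
          refine Finset.prod_le_prod' fun u hu => ?_
          obtain ⟨i, hi, rfl⟩ := Finset.mem_image.1 hu
          rw [Finset.mem_range] at hi
          exact two_le_cnt_singleton (by omega) (by omega)
      _ ≤ ∏ u ∈ A, cnt n {u} := by
          refine Finset.prod_le_prod_of_subset_of_one_le' hsub fun u hu _ => ?_
          exact cnt_pos _ (fun v hv => by
            rw [Finset.mem_singleton] at hv
            subst hv
            exact (hAm v hu).1.1)
  · intro u hu v hv hd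
    obtain ⟨⟨⟨hu1, hun⟩, huo⟩, huk⟩ := hAm u hu
    obtain ⟨⟨⟨hv1, hvn⟩, hvo⟩, hvk⟩ := hAm v hv
    -- an odd proper multiple of `u` is at least `3 * u`, which exceeds `12 * k`
    obtain ⟨c, rfl⟩ := hd
    have hc := (Nat.odd_mul.1 hvo).2
    have hc3 : c < 3 := by
      by_contra h
      have : u * 3 ≤ u * c := Nat.mul_le_mul_left _ (by omega)
      omega
    have hc1 : c = 1 := by
      obtain ⟨d, rfl⟩ := hc
      omega
    simp [hc1]

lemma M_pos (n : ℕ) : 0 < M n := by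
  rw [M_eq_cnt]
  exact cnt_pos _ (fun v hv => (mem_odds.1 hv).1)

lemma err_tendsto :
    Filter.Tendsto (fun n : ℕ => 4 * Real.exp (-√((1 / 6 - 1 / 12) * Real.log n *
      Real.log (Real.log n)))) Filter.atTop (nhds 0) := by
  have h1 : Filter.Tendsto (fun n : ℕ => Real.log n) Filter.atTop Filter.atTop :=
    Real.tendsto_log_atTop.comp tendsto_natCast_atTop_atTop
  have h2 := (h1.const_mul_atTop (show (0 : ℝ) < 1 / 6 - 1 / 12 by norm_num)).atTop_mul_atTop₀
    (Real.tendsto_log_atTop.comp h1)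
  have h3 := (Real.tendsto_exp_neg_atTop_nhds_zero.comp
    (Real.tendsto_sqrt_atTop.comp h2)).const_mul 4
  rw [mul_zero] at h3
  exact h3

/-- By `uniform_approx`, `log (M n') / n'` stays within a distance tending to `0` with `n` of one
constant for all `n' ≥ n`, so it is a Cauchy sequence. -/
lemma exists_limit :
    ∃ ℓ : ℝ, Filter.Tendsto (fun n : ℕ => Real.log (M n) / n) Filter.atTop (nhds ℓ) := by
  obtain ⟨N, hN⟩ := uniform_approx (ε := 1 / 12) (by norm_num) (by norm_num)
  apply cauchySeq_tendsto_of_complete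
  rw [Metric.cauchySeq_iff']
  intro η hη
  obtain ⟨N', hN'⟩ := Filter.eventually_atTop.1
    (err_tendsto.eventually (gt_mem_nhds (show 0 < η / 2 by positivity)))
  refine ⟨max N N', fun n hn => ?_⟩
  obtain ⟨h1, A, hA⟩ := hN (max N N') (le_max_left _ _)
  have hE := hN' (max N N') (le_max_right _ _)
  set m := max N N'
  have key : ∀ n' : ℕ, m ≤ n' → |Real.log (M n') / n' - A| < η / 2 := by
    intro n' hn'
    have h0 : (0 : ℝ) < n' := by exact_mod_cast h1.trans hn'
    have h2 := hA n' hn'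
    have h3 : Real.log (M n') / n' - A = (Real.log (M n') - A * n') / n' := by field_simp
    rw [h3, abs_div, abs_of_pos h0, div_lt_iff₀ h0]
    refine h2.trans_lt ?_
    rw [mul_comm]
    gcongr
  have h4 := abs_lt.1 (key n hn)
  have h5 := abs_lt.1 (key m le_rfl)
  rw [Real.dist_eq, abs_lt]
  constructor <;> linarith [h4.1, h4.2, h5.1, h5.2]

theorem maximum_primitive_count_asymptotic :
    ∃ β : ℝ, 1 < β ∧
      Filter.Tendsto (fun n : ℕ => (M n : ℝ) ^ ((n : ℝ)⁻¹)) Filter.atTop (nhds β) ∧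
      ∀ ε : ℝ, 0 < ε → ε < 1 / 6 →
        ∃ K : ℝ, 0 < K ∧ ∃ N : ℕ, ∀ n : ℕ, N ≤ n →
          |Real.log (M n) - (n : ℝ) * Real.log β| ≤
            K * n * Real.exp (-Real.sqrt ((1 / 6 - ε) * Real.log n * Real.log (Real.log n))) := by
  obtain ⟨ℓ, hℓ⟩ := exists_limit
  refine ⟨Real.exp ℓ, ?_, ?_, ?_⟩
  · rw [Real.one_lt_exp_iff]
    have h1 : Filter.Tendsto (fun k : ℕ => 12 * k) Filter.atTop Filter.atTop :=
      Filter.tendsto_id.const_mul_atTop' (by norm_num)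
    have h2 : Real.log 2 / 12 ≤ ℓ := by
      refine ge_of_tendsto (hℓ.comp h1) ?_
      filter_upwards [Filter.eventually_ge_atTop 1] with k hk
      have hk0 : (0 : ℝ) < k := by exact_mod_cast hk
      simp only [Function.comp_apply]
      push_cast
      rw [div_le_div_iff₀ (by norm_num) (by positivity)]
      have h3 : (k : ℝ) * Real.log 2 ≤ Real.log (M (12 * k)) := by
        rw [← Real.log_pow]
        apply Real.log_le_log (by positivity)
        exact_mod_cast two_pow_le_M k
      linarith
    have := Real.log_pos (show (1 : ℝ) < 2 by norm_num)
    linarith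
  · refine ((Real.continuous_exp.tendsto ℓ).comp hℓ).congr fun n => ?_
    have : (0 : ℝ) < M n := by exact_mod_cast M_pos n
    rw [Real.rpow_def_of_pos this, ← div_eq_mul_inv]
    rfl
  · intro ε hε hε'
    obtain ⟨N, hN⟩ := uniform_approx hε hε'
    refine ⟨8, by norm_num, N, fun n hn => ?_⟩
    obtain ⟨h1, A, hA⟩ := hN n hn
    rw [Real.log_exp]
    set E := 4 * Real.exp (-√((1 / 6 - ε) * Real.log n * Real.log (Real.log n))) with hE
    have hn0 : (0 : ℝ) < n := by exact_mod_cast h1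
    -- the approximation holds with the same `A` for all `n' ≥ n`, so it passes to the limit
    have h2 : |ℓ - A| ≤ E := by
      refine le_of_tendsto (hℓ.sub_const A).abs ?_
      filter_upwards [Filter.eventually_ge_atTop n] with n' hn'
      have h0 : (0 : ℝ) < n' := by exact_mod_cast h1.trans hn'
      have h3 : Real.log (M n') / n' - A = (Real.log (M n') - A * n') / n' := by field_simp
      rw [h3, abs_div, abs_of_pos h0, div_le_iff₀ h0]
      exact (hA n' hn').trans (le_of_eq (mul_comm _ _))
    have h3 := hA n le_rfl
    have h4 : Real.log (M n) - n * ℓ = (Real.log (M n) - A * n) - n * (ℓ - A) := by ring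
    have h5 : |(n : ℝ) * (ℓ - A)| ≤ n * E := by
      rw [abs_mul, abs_of_pos hn0]
      gcongr
    rw [h4]
    refine (abs_sub _ _).trans ((add_le_add h3 h5).trans (le_of_eq ?_))
    rw [hE]
    ring
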